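/- arXiv:math/0606015 — 5 statements merged into one kernel-verified Lean document; each statement's English description precedes it below -/
import Mathlib

section
/- Fix Λ > 0 and let b : [0,∞) → ℝ be continuous, nonnegative and integrable. Let E(t,s) be the fundamental solution of the dissipative system and E₀(t) = [[cos(Λt), sin(Λt)], [−sin(Λt), cos(Λt)]] the fundamental solution of the free system. Set Q(t,s) := E₀(s−t)·E(t,s) for t ≥ s ≥ 0. Then for every s ≥ 0 the limit Q(∞,s) := lim_{t→∞} Q(t,s) exists in the 2×2 complex matrices, and for all t ≥ s: ‖Q(∞,s) − Q(t,s)‖ ≤ 2(∫_t^∞ b(τ)dτ)·exp(2∫₀^∞ b(θ)dθ). -/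
open MeasureTheory Filter

/-- The operator (ℓ²) norm of a 2×2 complex matrix. -/
noncomputable def opNorm (A : Matrix (Fin 2) (Fin 2) ℂ) : ℝ :=
  ‖Matrix.toEuclideanCLM (𝕜 := ℂ) (n := Fin 2) A‖

/-- The coefficient matrix `[[0, Λ], [−Λ, −2b(t)]]` of the dissipative system. -/
noncomputable def sysMat (Λ : ℝ) (b : ℝ → ℝ) (t : ℝ) : Matrix (Fin 2) (Fin 2) ℂ :=
  !![0, (Λ : ℂ); (-Λ : ℂ), ((-2 * b t : ℝ) : ℂ)]

/-- The fundamental solution `E₀(t)` of the free system. -/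
noncomputable def freeMat (Λ t : ℝ) : Matrix (Fin 2) (Fin 2) ℂ :=
  !![(Real.cos (Λ * t) : ℂ), (Real.sin (Λ * t) : ℂ);
     (-(Real.sin (Λ * t)) : ℝ), (Real.cos (Λ * t) : ℂ)]

/-!
The splitting `sysMat Λ b t = freeGen Λ + dampMat (b t)` puts the system in the interaction picture:
the free rotation cancels in the derivative of `Q(t) = E₀(s - t) E(t)`, leaving
`Q' = E₀(s - t) (dampMat (b t)) E(t)`. Here `E₀` is unitary, and `E` is a contraction because the
energy of a solution has derivative `-4 b |u'|² ≤ 0`. Hence `‖Q'‖ ≤ 2 b`, which is integrable, so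
`Q` converges and the remainder is bounded by the tail of the integral. The energy argument
replaces Grönwall's inequality, so the bound holds even without the exponential factor.
-/

section Calculus

open scoped InnerProductSpace

theorem antitoneOn_norm_of_inner_deriv_nonpos {F : Type*} [NormedAddCommGroup F]
    [InnerProductSpace ℝ F] {u u' : ℝ → F} {D : Set ℝ} (hD : Convex ℝ D)
    (hu : ∀ t ∈ D, HasDerivWithinAt u (u' t) D t) (hinner : ∀ t ∈ D, ⟪u t, u' t⟫_ℝ ≤ 0) :
    AntitoneOn (fun t => ‖u t‖) D := by
  have energy_antitone : AntitoneOn (fun t => ‖u t‖ ^ 2) D :=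
    antitoneOn_of_hasDerivWithinAt_nonpos hD
      (fun t ht => (hu t ht).norm_sq.continuousWithinAt)
      (fun t ht => (hu t (interior_subset ht)).norm_sq.mono interior_subset)
      (fun t ht => mul_nonpos_of_nonneg_of_nonpos zero_le_two (hinner t (interior_subset ht)))
  exact fun t ht t' ht' htt' => le_of_sq_le_sq (energy_antitone ht ht' htt') (norm_nonneg _)

theorem exists_tendsto_atTop_of_norm_deriv_le {F : Type*} [NormedAddCommGroup F]
    [NormedSpace ℝ F] [CompleteSpace F] {f f' : ℝ → F} {g : ℝ → ℝ} {a : ℝ}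
    (hf : ∀ t ≥ a, HasDerivAt f (f' t) t) (hfg : ∀ t ≥ a, ‖f' t‖ ≤ g t)
    (hg : IntegrableOn g (Set.Ioi a)) :
    ∃ L, Tendsto f atTop (nhds L) ∧ ∀ t ≥ a, ‖L - f t‖ ≤ ∫ τ in Set.Ioi t, g τ := by
  have ae_le : ∀ᵐ τ ∂volume.restrict (Set.Ioi a), ‖f' τ‖ ≤ g τ :=
    ae_restrict_of_forall_mem measurableSet_Ioi fun τ hτ => hfg τ hτ.out.le
  have deriv_ae_eq : deriv f =ᵐ[volume.restrict (Set.Ioi a)] f' :=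
    ae_restrict_of_forall_mem measurableSet_Ioi fun τ hτ => (hf τ hτ.out.le).deriv
  have f'_integrable : IntegrableOn f' (Set.Ioi a) :=
    hg.mono' ((aestronglyMeasurable_deriv f _).congr deriv_ae_eq) ae_le
  have f_tendsto := tendsto_limUnder_of_hasDerivAt_of_integrableOn_Ioi
    (fun t ht => hf t (Set.mem_Ioi.1 ht).le) f'_integrable
  refine ⟨_, f_tendsto, fun t ht => ?_⟩
  have Ioi_subset : Set.Ioi t ⊆ Set.Ioi a := Set.Ioi_subset_Ioi ht
  rw [← integral_Ioi_of_hasDerivAt_of_tendsto' (fun τ hτ => hf τ (ht.le.trans hτ))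
    (f'_integrable.mono_set Ioi_subset) f_tendsto]
  exact norm_integral_le_of_norm_le (hg.mono_set Ioi_subset)
    (ae_restrict_of_ae_restrict_of_subset Ioi_subset ae_le)

theorem hasDerivAt_matrix {𝕜 R m n : Type*} [NontriviallyNormedField 𝕜] [NormedAddCommGroup R]
    [NormedSpace 𝕜 R] [Finite m] [Finite n] {A : 𝕜 → Matrix m n R} {A' : Matrix m n R} {t : 𝕜} :
    HasDerivAt A A' t ↔ ∀ i j, HasDerivAt (fun τ => A τ i j) (A' i j) t :=
  have := Fintype.ofFinite m
  have := Fintype.ofFinite n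
  hasDerivAt_pi.trans (forall_congr' fun _ => hasDerivAt_pi)

end Calculus

section InteractionPicture

variable {𝔸 : Type*} [NormedRing 𝔸] [NormedAlgebra ℝ 𝔸]

theorem hasDerivAt_mul_of_interaction {U E : ℝ → 𝔸} {A B : 𝔸} {t : ℝ}
    (hU : HasDerivAt U (-(U t * A)) t) (hE : HasDerivAt E ((A + B) * E t) t) :
    HasDerivAt (fun τ => U τ * E τ) (U t * (B * E t)) t :=
  (hU.mul hE).congr_deriv (by noncomm_ring)

theorem exists_tendsto_unitary_mul_of_interaction [StarRing 𝔸] [CStarRing 𝔸] [CompleteSpace 𝔸]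
    {U E B : ℝ → 𝔸} {A : 𝔸} {g : ℝ → ℝ} {s : ℝ} (hU : ∀ t ≥ s, U t ∈ unitary 𝔸)
    (hU' : ∀ t ≥ s, HasDerivAt U (-(U t * A)) t)
    (hE' : ∀ t ≥ s, HasDerivAt E ((A + B t) * E t) t)
    (hBE : ∀ t ≥ s, ‖B t * E t‖ ≤ g t) (hg : IntegrableOn g (Set.Ioi s)) :
    ∃ L, Tendsto (fun t => U t * E t) atTop (nhds L) ∧
      ∀ t ≥ s, ‖L - U t * E t‖ ≤ ∫ τ in Set.Ioi t, g τ := by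
  refine exists_tendsto_atTop_of_norm_deriv_le
    (fun t ht => hasDerivAt_mul_of_interaction (hU' t ht) (hE' t ht)) (fun t ht => ?_) hg
  rw [CStarRing.norm_mem_unitary_mul _ (hU t ht)]
  exact hBE t ht

end InteractionPicture

section L2OperatorNorm

open scoped InnerProductSpace Matrix.Norms.L2Operator

section DissipativeMatrix

variable {n : Type*} [Fintype n] [DecidableEq n]

theorem hasDerivAt_toEuclideanCLM_apply {A : ℝ → Matrix n n ℂ} {A' : Matrix n n ℂ} {t : ℝ}
    (hA : HasDerivAt A A' t) (v : EuclideanSpace ℂ n) :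
    HasDerivAt (fun τ => Matrix.toEuclideanCLM (𝕜 := ℂ) (A τ) v)
      (Matrix.toEuclideanCLM (𝕜 := ℂ) A' v) t :=
  let applyCLM : Matrix n n ℂ →L[ℂ] EuclideanSpace ℂ n :=
    (LinearMap.applyₗ v ∘ₗ Matrix.toEuclideanLin.toLinearMap).toContinuousLinearMap
  (applyCLM.restrictScalars ℝ).hasFDerivAt.comp_hasDerivAt t hA

theorem antitoneOn_norm_of_hasDerivAt_dissipative_mul {M E : ℝ → Matrix n n ℂ} {D : Set ℝ}
    (hD : Convex ℝ D) (hE : ∀ t ∈ D, HasDerivAt E (M t * E t) t)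
    (hM : ∀ t ∈ D, ∀ v : EuclideanSpace ℂ n,
      (⟪v, Matrix.toEuclideanCLM (𝕜 := ℂ) (M t) v⟫_ℂ).re ≤ 0) :
    AntitoneOn (fun t => ‖E t‖) D := by
  intro t ht t' ht' htt'
  refine ContinuousLinearMap.opNorm_le_bound _ (norm_nonneg _) fun v => ?_
  -- The instance found by default, the sum of the real inner products of the coordinates, does
  -- not unfold to the real part of the complex inner product.
  let : InnerProductSpace ℝ (EuclideanSpace ℂ n) := InnerProductSpace.complexToReal
  have orbit_antitone : AntitoneOn (fun τ => ‖Matrix.toEuclideanCLM (𝕜 := ℂ) (E τ) v‖) D := by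
    refine antitoneOn_norm_of_inner_deriv_nonpos hD
      (fun τ hτ => (hasDerivAt_toEuclideanCLM_apply (hE τ hτ) v).hasDerivWithinAt) fun τ hτ => ?_
    rw [map_mul]
    exact hM τ hτ (Matrix.toEuclideanCLM (𝕜 := ℂ) (E τ) v)
  exact (orbit_antitone ht ht' htt').trans (ContinuousLinearMap.le_opNorm _ _)

end DissipativeMatrix

/-- The generator of the free system: `freeMat Λ t` is the exponential of `t • freeGen Λ`. -/
noncomputable def freeGen (Λ : ℝ) : Matrix (Fin 2) (Fin 2) ℂ :=
  !![0, (Λ : ℂ); (-Λ : ℂ), 0]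

/-- The damping part of the coefficient matrix, for the value `c` of the dissipation. -/
noncomputable def dampMat (c : ℝ) : Matrix (Fin 2) (Fin 2) ℂ :=
  Matrix.diagonal ![0, ((-2 * c : ℝ) : ℂ)]

theorem sysMat_eq_freeGen_add_dampMat (Λ : ℝ) (b : ℝ → ℝ) (t : ℝ) :
    sysMat Λ b t = freeGen Λ + dampMat (b t) := by
  ext i j
  fin_cases i <;> fin_cases j <;> simp [sysMat, freeGen, dampMat]

theorem norm_dampMat (c : ℝ) : ‖dampMat c‖ = 2 * |c| := by
  simp [dampMat, Matrix.l2_opNorm_diagonal, Pi.norm_def, Fin.univ_succ]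

theorem re_inner_sysMat_apply_self (Λ : ℝ) (b : ℝ → ℝ) (t : ℝ) (v : EuclideanSpace ℂ (Fin 2)) :
    (⟪v, Matrix.toEuclideanCLM (𝕜 := ℂ) (sysMat Λ b t) v⟫_ℂ).re = -2 * b t * ‖v 1‖ ^ 2 := by
  have apply_zero : Matrix.toEuclideanCLM (𝕜 := ℂ) (sysMat Λ b t) v 0 = Λ * v 1 := by
    simp [sysMat, Matrix.mulVec, dotProduct]
  have apply_one : Matrix.toEuclideanCLM (𝕜 := ℂ) (sysMat Λ b t) v 1 =
      (-Λ : ℝ) * v 0 + (-2 * b t : ℝ) * v 1 := by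
    simp [sysMat, Matrix.mulVec, dotProduct]
  rw [PiLp.inner_apply, Fin.sum_univ_two, apply_zero, apply_one, ← Complex.normSq_eq_norm_sq,
    Complex.normSq_apply]
  simp only [RCLike.inner_apply, Complex.add_re, Complex.add_im, Complex.mul_re,
    Complex.mul_im, Complex.ofReal_re, Complex.ofReal_im, Complex.conj_re, Complex.conj_im]
  ring

theorem freeMat_zero (Λ : ℝ) : freeMat Λ 0 = 1 := by
  simp [freeMat, Matrix.one_fin_two]

theorem freeMat_add (Λ s t : ℝ) : freeMat Λ (s + t) = freeMat Λ s * freeMat Λ t := by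
  simp only [freeMat, Matrix.mul_fin_two, mul_add, Real.cos_add, Real.sin_add]
  push_cast
  ring_nf

theorem star_freeMat (Λ t : ℝ) : star (freeMat Λ t) = freeMat Λ (-t) := by
  ext i j
  fin_cases i <;> fin_cases j <;> simp [freeMat, ← Complex.cos_conj, ← Complex.sin_conj]

theorem freeMat_mem_unitary (Λ t : ℝ) : freeMat Λ t ∈ unitary (Matrix (Fin 2) (Fin 2) ℂ) := by
  refine Matrix.mem_unitaryGroup_iff.2 ?_
  rw [star_freeMat, ← freeMat_add, add_neg_cancel, freeMat_zero]

theorem hasDerivAt_freeMat (Λ t : ℝ) : HasDerivAt (freeMat Λ) (freeMat Λ t * freeGen Λ) t := by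
  have hphase : HasDerivAt (fun τ => Λ * τ) Λ t := by
    simpa using (hasDerivAt_id t).const_mul Λ
  have hcos := hphase.cos.ofReal_comp
  have hsin := hphase.sin.ofReal_comp
  have hnegsin := hphase.sin.neg.ofReal_comp
  refine hasDerivAt_matrix.2 fun i j => ?_
  fin_cases i <;> fin_cases j
  · exact hcos.congr_deriv (by simp [freeMat, freeGen])
  · exact hsin.congr_deriv (by simp [freeMat, freeGen])
  · exact hnegsin.congr_deriv (by simp [freeMat, freeGen])
  · exact hcos.congr_deriv (by simp [freeMat, freeGen])

theorem norm_le_one_of_hasDerivAt_sysMat_mul {Λ s t : ℝ} {b : ℝ → ℝ}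
    {E : ℝ → Matrix (Fin 2) (Fin 2) ℂ} (hb0 : ∀ t ≥ s, 0 ≤ b t) (hE0 : E s = 1)
    (hE : ∀ t ≥ s, HasDerivAt E (sysMat Λ b t * E t) t) (ht : s ≤ t) : ‖E t‖ ≤ 1 := by
  have sysMat_dissipative : ∀ τ ∈ Set.Ici s, ∀ v : EuclideanSpace ℂ (Fin 2),
      (⟪v, Matrix.toEuclideanCLM (𝕜 := ℂ) (sysMat Λ b τ) v⟫_ℂ).re ≤ 0 := fun τ hτ v => by
    have damping_nonneg := mul_nonneg (hb0 τ hτ) (sq_nonneg ‖v 1‖)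
    rw [re_inner_sysMat_apply_self]
    linarith
  calc ‖E t‖ ≤ ‖E s‖ := antitoneOn_norm_of_hasDerivAt_dissipative_mul (convex_Ici s) hE
        sysMat_dissipative Set.self_mem_Ici ht ht
    _ = 1 := by rw [hE0, norm_one]

theorem Q_limit_exists_with_rate_general {Λ s : ℝ} {b : ℝ → ℝ}
    {E : ℝ → Matrix (Fin 2) (Fin 2) ℂ} (hb0 : ∀ t ≥ s, 0 ≤ b t)
    (hbi : IntegrableOn b (Set.Ioi s)) (hE0 : E s = 1)
    (hE : ∀ t ≥ s, ∀ i j, HasDerivAt (fun τ => E τ i j) ((sysMat Λ b t * E t) i j) t) :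
    ∃ Qinf : Matrix (Fin 2) (Fin 2) ℂ,
      Tendsto (fun t => freeMat Λ (s - t) * E t) atTop (nhds Qinf) ∧
      ∀ t ≥ s, opNorm (Qinf - freeMat Λ (s - t) * E t) ≤ 2 * ∫ τ in Set.Ioi t, b τ := by
  have hE' : ∀ t ≥ s, HasDerivAt E (sysMat Λ b t * E t) t :=
    fun t ht => hasDerivAt_matrix.2 (hE t ht)
  have damping_le : ∀ t ≥ s, ‖dampMat (b t) * E t‖ ≤ 2 * b t := fun t ht =>
    calc ‖dampMat (b t) * E t‖ ≤ ‖dampMat (b t)‖ * ‖E t‖ := norm_mul_le _ _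
      _ ≤ ‖dampMat (b t)‖ :=
        mul_le_of_le_one_right (norm_nonneg _) (norm_le_one_of_hasDerivAt_sysMat_mul hb0 hE0 hE' ht)
      _ = 2 * b t := by rw [norm_dampMat, abs_of_nonneg (hb0 t ht)]
  simp only [← integral_const_mul]
  exact exists_tendsto_unitary_mul_of_interaction (fun t _ => freeMat_mem_unitary Λ (s - t))
    (fun t _ => (hasDerivAt_freeMat Λ (s - t)).comp_const_sub s t)
    (fun t ht => sysMat_eq_freeGen_add_dampMat Λ b t ▸ hE' t ht) damping_le (hbi.const_mul 2)

end L2OperatorNorm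

theorem two_mul_integral_Ioi_le_mul_exp {b : ℝ → ℝ} (hb0 : ∀ t ≥ (0 : ℝ), 0 ≤ b t) {t : ℝ}
    (ht : 0 ≤ t) :
    2 * ∫ τ in Set.Ioi t, b τ ≤
      2 * (∫ τ in Set.Ioi t, b τ) * Real.exp (2 * ∫ θ in Set.Ioi (0 : ℝ), b θ) := by
  have integral_b_nonneg : ∀ r ≥ (0 : ℝ), 0 ≤ ∫ τ in Set.Ioi r, b τ := fun r hr =>
    setIntegral_nonneg measurableSet_Ioi fun τ hτ => hb0 τ (hr.le.trans hτ.out.le)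
  exact le_mul_of_one_le_right (mul_nonneg zero_le_two (integral_b_nonneg t ht))
    (Real.one_le_exp (mul_nonneg zero_le_two (integral_b_nonneg 0 le_rfl)))

/-- For integrable nonnegative dissipation `b`, the matrices
`Q(t,s) = E₀(s−t)·E(t,s)` converge as `t → ∞`, with the convergence rate
`‖Q(∞,s) − Q(t,s)‖ ≤ 2(∫_t^∞ b) exp(2∫_0^∞ b)`. -/
theorem Q_limit_exists_with_rate
    (Λ : ℝ) (hΛ : 0 < Λ) (b : ℝ → ℝ)
    (hbc : ContinuousOn b (Set.Ici 0))
    (hb0 : ∀ t ≥ (0:ℝ), 0 ≤ b t) (hbi : IntegrableOn b (Set.Ici 0))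
    (E : ℝ → ℝ → Matrix (Fin 2) (Fin 2) ℂ)
    (hE0 : ∀ s ≥ (0:ℝ), E s s = 1)
    (hE : ∀ s ≥ (0:ℝ), ∀ t ≥ s, ∀ i j : Fin 2,
      HasDerivAt (fun τ => E τ s i j) ((sysMat Λ b t * E t s) i j) t) :
    ∀ s ≥ (0:ℝ), ∃ Qinf : Matrix (Fin 2) (Fin 2) ℂ,
      Tendsto (fun t => freeMat Λ (s - t) * E t s) atTop (nhds Qinf) ∧
      ∀ t ≥ s, opNorm (Qinf - freeMat Λ (s - t) * E t s) ≤
        2 * (∫ τ in Set.Ioi t, b τ) * Real.exp (2 * ∫ θ in Set.Ioi (0:ℝ), b θ) := by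
  intro s hs
  obtain ⟨Qinf, hlim, hrate⟩ := Q_limit_exists_with_rate_general (E := fun t => E t s)
    (fun t ht => hb0 t (hs.le.trans ht)) (hbi.mono_set (Set.Ioi_subset_Ici hs)) (hE0 s hs) (hE s hs)
  exact ⟨Qinf, hlim, fun t ht =>
    (hrate t ht).trans (two_mul_integral_Ioi_le_mul_exp hb0 (hs.le.trans ht))⟩
end

section
/- Let b : [0,∞) → ℝ be continuously differentiable with b(t) ≥ 0, b(t) ≤ C₁(1+t)^{−1} and |b'(t)| ≤ C₂(1+t)^{−2} for all t ≥ 0, and assume limsup_{t→∞} t·b(t) < 1/2. Set λ(t) = exp(∫₀^t b(τ)dτ). Let N > 0, γ ≥ 0 and K > 0 be such that Λ^γ·λ(t)² ≤ K whenever Λ > 0, t ≥ 0 and Λ(1+t) ≤ N. Then there is a constant C > 0 (depending only on b, N, γ, K) such that for all Λ > 0 and all t ≥ 0 with Λ(1+t) ≤ N, the fundamental solution E(t,0) of the dissipative system satisfies the entrywise bounds |E(t,0)_{11}| ≤ C·Λ^{−γ}·λ(t)^{−2}, |E(t,0)_{21}| ≤ C·Λ^{−γ}·λ(t)^{−2},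 |E(t,0)_{12}| ≤ C·λ(t)^{−2}, |E(t,0)_{22}| ≤ C·λ(t)^{−2}. -/
open MeasureTheory Filter

/-- The auxiliary function `λ(t) = exp(∫₀^t b)`. -/
noncomputable def lam (b : ℝ → ℝ) (t : ℝ) : ℝ := Real.exp (∫ τ in (0:ℝ)..t, b τ)

/-!
Write `(v, w)` for a column of `E`. In the first column the energy `‖v‖² + ‖w‖²` starts at `1` and
damping can only decrease it; the hypothesis on `Λ ^ γ * λ(t) ^ 2` turns `1` into the claimed bound.

For the second column put `y = λ² w`. Then `v' = Λ λ⁻² y` and `y' = -Λ λ² v` with `v(0) = 0`, so a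
Grönwall argument bounds `y` by the exponential of `Λ² ∫₀ᵗ λ(s)² (∫₀ˢ λ⁻²) ds`. The assumption
`limsup t b(t) < 1/2` says that `λ²` grows no faster than a power of `t` smaller than one, which
gives `λ(s)² ∫₀ˢ λ⁻² ≤ A (1 + s)`; the exponent is therefore at most `A (Λ (1 + t))² ≤ A N²`.
-/

section HalfLine

open Set

variable {F : Type*} [NormedAddCommGroup F] [NormedSpace ℝ F] {a t : ℝ}

lemma continuousOn_Ici_of_hasDerivWithinAt {f f' : ℝ → F}
    (hf : ∀ s ≥ a, HasDerivWithinAt f (f' s) (Ici a) s) : ContinuousOn f (Ici a) :=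
  fun s hs => (hf s hs).continuousWithinAt

lemma hasDerivWithinAt_integral_Ici [CompleteSpace F] {f : ℝ → F} (hf : ContinuousOn f (Ici a))
    (ht : a ≤ t) :
    HasDerivWithinAt (fun r => ∫ s in a..r, f s) (f t) (Ici a) t := by
  have hext : Continuous fun s => f (max a s) :=
    hf.comp_continuous (by fun_prop) fun s => le_max_left a s
  have heq : ∀ r ≥ a, ∫ s in a..r, f s = ∫ s in a..r, f (max a s) := by
    refine fun r hr => intervalIntegral.integral_congr fun s hs => ?_
    rw [uIcc_of_le hr] at hs
    simp only [max_eq_right hs.1]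
  have hderiv : HasDerivAt (fun r => ∫ s in a..r, f (max a s)) (f t) t := by
    simpa only [max_eq_right ht] using (hext.integral_hasStrictDerivAt a t).hasDerivAt
  exact hderiv.hasDerivWithinAt.congr heq (heq t ht)

lemma le_of_hasDerivWithinAt_Ici_le {f f' g g' : ℝ → ℝ}
    (hf : ∀ s ≥ a, HasDerivWithinAt f (f' s) (Ici a) s)
    (hg : ∀ s ≥ a, HasDerivWithinAt g (g' s) (Ici a) s)
    (ha : f a ≤ g a) (hle : ∀ s ≥ a, f' s ≤ g' s) (ht : a ≤ t) : f t ≤ g t :=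
  image_le_of_deriv_right_le_deriv_boundary
    ((continuousOn_Ici_of_hasDerivWithinAt hf).mono Icc_subset_Ici_self)
    (fun s hs => (hf s hs.1).mono (Ici_subset_Ici.2 hs.1)) ha
    ((continuousOn_Ici_of_hasDerivWithinAt hg).mono Icc_subset_Ici_self)
    (fun s hs => (hg s hs.1).mono (Ici_subset_Ici.2 hs.1))
    (fun s hs => hle s hs.1) (right_mem_Icc.2 ht)

lemma norm_le_of_norm_hasDerivWithinAt_Ici_le {f f' : ℝ → F} {g g' : ℝ → ℝ}
    (hf : ∀ s ≥ a, HasDerivWithinAt f (f' s) (Ici a) s)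
    (hg : ∀ s ≥ a, HasDerivWithinAt g (g' s) (Ici a) s)
    (ha : ‖f a‖ ≤ g a) (hle : ∀ s ≥ a, ‖f' s‖ ≤ g' s) (ht : a ≤ t) : ‖f t‖ ≤ g t :=
  image_norm_le_of_norm_deriv_right_le_deriv_boundary'
    ((continuousOn_Ici_of_hasDerivWithinAt hf).mono Icc_subset_Ici_self)
    (fun s hs => (hf s hs.1).mono (Ici_subset_Ici.2 hs.1)) ha
    ((continuousOn_Ici_of_hasDerivWithinAt hg).mono Icc_subset_Ici_self)
    (fun s hs => (hg s hs.1).mono (Ici_subset_Ici.2 hs.1))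
    (fun s hs => hle s hs.1) (right_mem_Icc.2 ht)

lemma le_mul_exp_integral_of_hasDerivWithinAt_le {f f' k : ℝ → ℝ}
    (hf : ∀ s ≥ a, HasDerivWithinAt f (f' s) (Ici a) s) (hk : ContinuousOn k (Ici a))
    (hle : ∀ s ≥ a, f' s ≤ k s * f s) (ht : a ≤ t) :
    f t ≤ f a * Real.exp (∫ s in a..t, k s) := by
  have hderiv : ∀ s ≥ a, HasDerivWithinAt (fun r => f r * Real.exp (-∫ s in a..r, k s))
      ((f' s - k s * f s) * Real.exp (-∫ r in a..s, k r)) (Ici a) s := fun s hs =>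
    ((hf s hs).mul (hasDerivWithinAt_integral_Ici hk hs).fun_neg.exp).congr_deriv (by ring)
  have hdecr : f t * Real.exp (-∫ s in a..t, k s) ≤ f a :=
    le_of_hasDerivWithinAt_Ici_le hderiv (fun s _ => hasDerivWithinAt_const s _ (f a)) (by simp)
      (fun s hs => mul_nonpos_of_nonpos_of_nonneg (sub_nonpos.2 (hle s hs)) (Real.exp_pos _).le) ht
  rwa [Real.exp_neg, ← div_eq_mul_inv, div_le_iff₀ (Real.exp_pos _)] at hdecr

end HalfLine

section CoupledGronwall

open Set

variable {F₁ F₂ : Type*} [NormedAddCommGroup F₁] [NormedSpace ℝ F₁]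
  [NormedAddCommGroup F₂] [NormedSpace ℝ F₂]

/- The majorants `V = ∫ α ‖y‖` and `Y = ‖y a‖ + ∫ β V` of `‖v‖` and `‖y‖` are nondecreasing, so
`V ≤ (∫ α) Y`, which closes the inequality `Y' = β V` to a scalar Grönwall inequality. -/
theorem norm_le_of_coupled_hasDerivWithinAt_le {a t : ℝ} {v v' : ℝ → F₁} {y y' : ℝ → F₂}
    {α β : ℝ → ℝ} (hα : ContinuousOn α (Ici a)) (hβ : ContinuousOn β (Ici a))
    (hα0 : ∀ s ≥ a, 0 ≤ α s) (hβ0 : ∀ s ≥ a, 0 ≤ β s)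
    (hv : ∀ s ≥ a, HasDerivWithinAt v (v' s) (Ici a) s)
    (hy : ∀ s ≥ a, HasDerivWithinAt y (y' s) (Ici a) s)
    (hva : v a = 0) (hv' : ∀ s ≥ a, ‖v' s‖ ≤ α s * ‖y s‖) (hy' : ∀ s ≥ a, ‖y' s‖ ≤ β s * ‖v s‖)
    (ht : a ≤ t) :
    ‖v t‖ ≤ (∫ r in a..t, α r) * (‖y a‖ * Real.exp (∫ s in a..t, β s * ∫ r in a..s, α r)) ∧
      ‖y t‖ ≤ ‖y a‖ * Real.exp (∫ s in a..t, β s * ∫ r in a..s, α r) := by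
  set G : ℝ → ℝ := fun s => ∫ r in a..s, α r
  set V : ℝ → ℝ := fun s => ∫ r in a..s, α r * ‖y r‖
  set Y : ℝ → ℝ := fun s => ‖y a‖ + ∫ r in a..s, β r * V r
  have hG : ∀ s ≥ a, HasDerivWithinAt G (α s) (Ici a) s := fun s =>
    hasDerivWithinAt_integral_Ici hα
  have hV : ∀ s ≥ a, HasDerivWithinAt V (α s * ‖y s‖) (Ici a) s := fun s =>
    hasDerivWithinAt_integral_Ici (hα.mul (continuousOn_Ici_of_hasDerivWithinAt hy).norm)
  have hY : ∀ s ≥ a, HasDerivWithinAt Y (β s * V s) (Ici a) s := fun s hs =>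
    (hasDerivWithinAt_integral_Ici
      (hβ.mul (continuousOn_Ici_of_hasDerivWithinAt hV)) hs).const_add _
  have hG0 : ∀ s ≥ a, 0 ≤ G s := fun s hs =>
    intervalIntegral.integral_nonneg hs fun r hr => hα0 r hr.1
  have hvV : ∀ s ≥ a, ‖v s‖ ≤ V s := fun s =>
    norm_le_of_norm_hasDerivWithinAt_Ici_le hv hV (by simp [V, hva]) hv'
  have hV0 : ∀ s ≥ a, 0 ≤ V s := fun s hs => (norm_nonneg _).trans (hvV s hs)
  have hyY : ∀ s ≥ a, ‖y s‖ ≤ Y s := fun s =>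
    norm_le_of_norm_hasDerivWithinAt_Ici_le hy hY (by simp [Y]) fun r hr =>
      (hy' r hr).trans (mul_le_mul_of_nonneg_left (hvV r hr) (hβ0 r hr))
  have hVGY : ∀ s ≥ a, V s ≤ G s * Y s := fun s =>
    le_of_hasDerivWithinAt_Ici_le hV (fun r hr => (hG r hr).mul (hY r hr)) (by simp [V, G])
      fun r hr => (mul_le_mul_of_nonneg_left (hyY r hr) (hα0 r hr)).trans <|
        le_add_of_nonneg_right (mul_nonneg (hG0 r hr) (mul_nonneg (hβ0 r hr) (hV0 r hr)))
  have hY_le : Y t ≤ ‖y a‖ * Real.exp (∫ s in a..t, β s * G s) := by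
    simpa [Y] using le_mul_exp_integral_of_hasDerivWithinAt_le hY
      (hβ.mul (continuousOn_Ici_of_hasDerivWithinAt hG))
      (fun s hs => (mul_le_mul_of_nonneg_left (hVGY s hs) (hβ0 s hs)).trans_eq
        (mul_assoc _ _ _).symm) ht
  exact ⟨(hvV t ht).trans <| (hVGY t ht).trans <| mul_le_mul_of_nonneg_left hY_le (hG0 t ht),
    (hyY t ht).trans hY_le⟩

end CoupledGronwall

lemma integral_sq_mul_le_of_le_mul_one_add {f : ℝ → ℝ} {Λ A N t : ℝ} (hΛ : 0 ≤ Λ)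
    (hf0 : ∀ s ≥ (0 : ℝ), 0 ≤ f s) (hf : ∀ s ≥ (0 : ℝ), f s ≤ A * (1 + s)) (ht : 0 ≤ t)
    (hzone : Λ * (1 + t) ≤ N) : ∫ s in 0..t, Λ ^ 2 * f s ≤ A * N ^ 2 := by
  have hA : 0 ≤ A := by simpa using (hf0 0 le_rfl).trans (hf 0 le_rfl)
  have hintegrand : ∀ s ∈ Set.uIoc 0 t, ‖Λ ^ 2 * f s‖ ≤ Λ ^ 2 * (A * (1 + t)) := by
    intro s hs
    rw [Set.uIoc_of_le ht] at hs
    rw [Real.norm_of_nonneg (mul_nonneg (sq_nonneg Λ) (hf0 s hs.1.le))]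
    gcongr
    exact (hf s hs.1.le).trans (by gcongr; exact hs.2)
  calc ∫ s in 0..t, Λ ^ 2 * f s
      ≤ Λ ^ 2 * (A * (1 + t)) * |t - 0| :=
        (Real.le_norm_self _).trans (intervalIntegral.norm_integral_le_of_norm_le_const hintegrand)
    _ = A * (Λ * (1 + t)) * (Λ * t) := by rw [sub_zero, abs_of_nonneg ht]; ring
    _ ≤ A * (Λ * (1 + t)) * (Λ * (1 + t)) := by gcongr; linarith
    _ = A * (Λ * (1 + t)) ^ 2 := by ring
    _ ≤ A * N ^ 2 := by gcongr

section SublinearWeight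

open Set

variable {ρ ρ' : ℝ → ℝ} {κ : ℝ}

lemma mul_integral_inv_le_of_growth {T A t : ℝ}
    (hρ : ∀ s ≥ (0 : ℝ), HasDerivWithinAt ρ (ρ' s) (Ici 0) s) (hpos : ∀ s ≥ (0 : ℝ), 0 < ρ s)
    (hT : 0 ≤ T) (hgrowth : ∀ s ≥ T, s * ρ' s ≤ κ * ρ s) (hA : 0 ≤ A) (hκA : 1 ≤ A * (1 - κ))
    (hstart : ρ T * ∫ s in 0..T, (ρ s)⁻¹ ≤ A * T) (ht : T ≤ t) :
    ρ t * ∫ s in 0..t, (ρ s)⁻¹ ≤ A * t := by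
  have hinv : ContinuousOn (fun s => (ρ s)⁻¹) (Ici 0) :=
    (continuousOn_Ici_of_hasDerivWithinAt hρ).inv₀ fun s hs => (hpos s hs).ne'
  have hbarrier : ∀ s ≥ T, HasDerivWithinAt (fun r => A * r / ρ r)
      (A * (ρ s - s * ρ' s) / ρ s ^ 2) (Ici T) s := fun s hs =>
    ((((hasDerivWithinAt_id s _).const_mul A).div (hρ s (hT.trans hs))
      (hpos s (hT.trans hs)).ne').mono (Ici_subset_Ici.2 hT)).congr_deriv <| by
        simp only [mul_one, id_eq]
        ring
  have hslope : ∀ s ≥ T, (ρ s)⁻¹ ≤ A * (ρ s - s * ρ' s) / ρ s ^ 2 := fun s hs => by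
    have hρs := hpos s (hT.trans hs)
    rw [le_div_iff₀ (pow_pos hρs 2)]
    calc (ρ s)⁻¹ * ρ s ^ 2 = 1 * ρ s := by field_simp
      _ ≤ A * (1 - κ) * ρ s := by gcongr
      _ = A * (ρ s - κ * ρ s) := by ring
      _ ≤ A * (ρ s - s * ρ' s) := by gcongr A * (ρ s - ?_); exact hgrowth s hs
  have hle : ∫ s in 0..t, (ρ s)⁻¹ ≤ A * t / ρ t :=
    le_of_hasDerivWithinAt_Ici_le
      (fun s hs => (hasDerivWithinAt_integral_Ici hinv (hT.trans hs)).mono (Ici_subset_Ici.2 hT))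
      hbarrier (by rwa [le_div_iff₀' (hpos T hT)]) hslope ht
  rwa [le_div_iff₀' (hpos t (hT.trans ht))] at hle

lemma exists_mul_integral_inv_le
    (hρ : ∀ s ≥ (0 : ℝ), HasDerivWithinAt ρ (ρ' s) (Ici 0) s) (hpos : ∀ s ≥ (0 : ℝ), 0 < ρ s)
    (hκ : κ < 1) (hgrowth : ∀ᶠ s in atTop, s * ρ' s ≤ κ * ρ s) :
    ∃ A, ∀ t ≥ (0 : ℝ), ρ t * ∫ s in 0..t, (ρ s)⁻¹ ≤ A * (1 + t) := by
  obtain ⟨T, hT_growth, hT⟩ := (eventually_forall_ge_atTop.2 hgrowth |>.and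
    (eventually_ge_atTop 1)).exists
  have hρc := continuousOn_Ici_of_hasDerivWithinAt hρ
  have hcont : ContinuousOn (fun t => ρ t * ∫ s in 0..t, (ρ s)⁻¹) (Ici 0) :=
    hρc.mul <| continuousOn_Ici_of_hasDerivWithinAt fun s =>
      hasDerivWithinAt_integral_Ici (hρc.inv₀ fun r hr => (hpos r hr).ne')
  obtain ⟨M, hM⟩ := (isCompact_Icc (a := 0) (b := T)).bddAbove_image
    (hcont.mono Icc_subset_Ici_self)
  replace hM : ∀ t ∈ Icc 0 T, ρ t * ∫ s in 0..t, (ρ s)⁻¹ ≤ M := fun t ht =>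
    hM (mem_image_of_mem _ ht)
  set A : ℝ := max M (1 / (1 - κ))
  have hA : 0 < A := lt_max_of_lt_right (one_div_pos.2 (sub_pos.2 hκ))
  refine ⟨A, fun t ht => ?_⟩
  rcases le_total t T with htT | hTt
  · calc ρ t * ∫ s in 0..t, (ρ s)⁻¹ ≤ A := (hM t ⟨ht, htT⟩).trans (le_max_left _ _)
      _ ≤ A * (1 + t) := le_mul_of_one_le_right hA.le (by linarith)
  · have hκA : 1 ≤ A * (1 - κ) := (div_le_iff₀ (sub_pos.2 hκ)).1 (le_max_right _ _)
    have hstart : ρ T * ∫ s in 0..T, (ρ s)⁻¹ ≤ A * T :=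
      (hM T ⟨by linarith, le_rfl⟩).trans <| (le_max_left _ _).trans <|
        le_mul_of_one_le_right hA.le hT
    calc ρ t * ∫ s in 0..t, (ρ s)⁻¹ ≤ A * t :=
          mul_integral_inv_le_of_growth hρ hpos (by linarith) hT_growth hA.le hκA hstart hTt
      _ ≤ A * (1 + t) := by gcongr; linarith

end SublinearWeight

section Lam

variable {b : ℝ → ℝ}

lemma lam_pos (b : ℝ → ℝ) (t : ℝ) : 0 < lam b t := Real.exp_pos _

lemma lam_zero (b : ℝ → ℝ) : lam b 0 = 1 := by simp [lam]

lemma hasDerivWithinAt_lam_sq (hb : ContinuousOn b (Set.Ici 0)) {t : ℝ} (ht : 0 ≤ t) :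
    HasDerivWithinAt (fun s => lam b s ^ 2) (2 * b t * lam b t ^ 2) (Set.Ici 0) t :=
  ((hasDerivWithinAt_integral_Ici hb ht).exp.fun_pow 2).congr_deriv (by simp only [lam]; ring)

lemma exists_lam_sq_mul_integral_inv_le (hb : ContinuousOn b (Set.Ici 0))
    (hlimsup : ∃ μ < (1 / 2 : ℝ), ∀ᶠ t in atTop, t * b t ≤ μ) :
    ∃ A, ∀ t ≥ (0 : ℝ), lam b t ^ 2 * ∫ s in 0..t, (lam b s ^ 2)⁻¹ ≤ A * (1 + t) := by
  obtain ⟨μ, hμ, hbμ⟩ := hlimsup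
  refine exists_mul_integral_inv_le (κ := 2 * μ) (fun s => hasDerivWithinAt_lam_sq hb)
    (fun s _ => pow_pos (lam_pos b s) 2) (by linarith) ?_
  filter_upwards [hbμ] with s hs
  calc s * (2 * b s * lam b s ^ 2) = 2 * (s * b s) * lam b s ^ 2 := by ring
    _ ≤ 2 * μ * lam b s ^ 2 := by gcongr

end Lam

/-- `(v, w)` solves, on `[0, ∞)`, the first-order form of `u'' + d u' + Λ² u = 0` in the variables
`v = Λ u` and `w = u'`, with damping coefficient `d`. At `0` the derivatives are one-sided. -/
structure IsDampedSolution {F : Type*} [NormedAddCommGroup F] [NormedSpace ℝ F]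
    (Λ : ℝ) (d : ℝ → ℝ) (v w : ℝ → F) : Prop where
  hasDerivWithinAt_fst : ∀ t ≥ (0 : ℝ), HasDerivWithinAt v (Λ • w t) (Set.Ici 0) t
  hasDerivWithinAt_snd : ∀ t ≥ (0 : ℝ),
    HasDerivWithinAt w (-(Λ • v t) - d t • w t) (Set.Ici 0) t

namespace IsDampedSolution

lemma norm_sq_add_norm_sq_le {F : Type*} [NormedAddCommGroup F] [InnerProductSpace ℝ F]
    {Λ : ℝ} {d : ℝ → ℝ} {v w : ℝ → F} (h : IsDampedSolution Λ d v w)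
    (hd : ∀ s ≥ (0 : ℝ), 0 ≤ d s) {t : ℝ} (ht : 0 ≤ t) :
    ‖v t‖ ^ 2 + ‖w t‖ ^ 2 ≤ ‖v 0‖ ^ 2 + ‖w 0‖ ^ 2 := by
  have henergy : ∀ s ≥ (0 : ℝ), HasDerivWithinAt (fun r => ‖v r‖ ^ 2 + ‖w r‖ ^ 2)
      (-(2 * d s * ‖w s‖ ^ 2)) (Set.Ici 0) s := fun s hs => by
    refine ((h.hasDerivWithinAt_fst s hs).norm_sq.add
      (h.hasDerivWithinAt_snd s hs).norm_sq).congr_deriv ?_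
    rw [inner_sub_right, inner_neg_right, inner_smul_right, inner_smul_right, inner_smul_right,
      real_inner_self_eq_norm_sq, real_inner_comm (v s) (w s)]
    ring
  exact le_of_hasDerivWithinAt_Ici_le henergy
    (fun s _ => hasDerivWithinAt_const s _ (‖v 0‖ ^ 2 + ‖w 0‖ ^ 2)) le_rfl
    (fun s hs => neg_nonpos.2 <| by have := hd s hs; positivity) ht

variable {F : Type*} [NormedAddCommGroup F] [NormedSpace ℝ F]
  {Λ A N t : ℝ} {b : ℝ → ℝ} {v w : ℝ → F}

lemma hasDerivWithinAt_lam_sq_smul_snd (h : IsDampedSolution Λ (fun s => 2 * b s) v w)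
    (hb : ContinuousOn b (Set.Ici 0)) (ht : 0 ≤ t) :
    HasDerivWithinAt (fun s => lam b s ^ 2 • w s) (-((Λ * lam b t ^ 2) • v t)) (Set.Ici 0) t :=
  ((hasDerivWithinAt_lam_sq hb ht).smul (h.hasDerivWithinAt_snd t ht)).congr_deriv (by module)

lemma norm_le_of_fst_zero (h : IsDampedSolution Λ (fun s => 2 * b s) v w)
    (hb : ContinuousOn b (Set.Ici 0)) (hΛ : 0 ≤ Λ) (hv0 : v 0 = 0) (ht : 0 ≤ t) :
    ‖v t‖ ≤ Λ * (∫ s in 0..t, (lam b s ^ 2)⁻¹) * (‖w 0‖ * Real.exp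
        (∫ s in 0..t, Λ ^ 2 * (lam b s ^ 2 * ∫ r in 0..s, (lam b r ^ 2)⁻¹))) ∧
      lam b t ^ 2 * ‖w t‖ ≤ ‖w 0‖ * Real.exp
        (∫ s in 0..t, Λ ^ 2 * (lam b s ^ 2 * ∫ r in 0..s, (lam b r ^ 2)⁻¹)) := by
  have hρ : ContinuousOn (fun s => lam b s ^ 2) (Set.Ici 0) :=
    continuousOn_Ici_of_hasDerivWithinAt fun s => hasDerivWithinAt_lam_sq hb
  have hpos : ∀ s, 0 < lam b s ^ 2 := fun s => pow_pos (lam_pos b s) 2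
  have hnorm : ∀ s, ‖lam b s ^ 2 • w s‖ = lam b s ^ 2 * ‖w s‖ := fun s =>
    norm_smul_of_nonneg (hpos s).le _
  have hbound := norm_le_of_coupled_hasDerivWithinAt_le (t := t)
    (α := fun s => Λ * (lam b s ^ 2)⁻¹) (β := fun s => Λ * lam b s ^ 2)
    (continuousOn_const.mul (hρ.inv₀ fun s _ => (hpos s).ne')) (continuousOn_const.mul hρ)
    (fun s _ => by have := hpos s; positivity) (fun s _ => by have := hpos s; positivity)
    h.hasDerivWithinAt_fst (fun s => h.hasDerivWithinAt_lam_sq_smul_snd hb) hv0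
    (fun s _ => by
      rw [norm_smul_of_nonneg hΛ, hnorm, mul_assoc, inv_mul_cancel_left₀ (hpos s).ne'])
    (fun s _ => by rw [norm_neg, norm_smul_of_nonneg (mul_nonneg hΛ (hpos s).le)]) ht
  have hnorm_zero : ‖lam b 0 ^ 2 • w 0‖ = ‖w 0‖ := by simp [lam_zero]
  have hexponent : ∀ s, Λ * lam b s ^ 2 * (Λ * ∫ r in 0..s, (lam b r ^ 2)⁻¹) =
      Λ ^ 2 * (lam b s ^ 2 * ∫ r in 0..s, (lam b r ^ 2)⁻¹) := fun s => by ring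
  simpa only [intervalIntegral.integral_const_mul, hnorm_zero, hnorm, hexponent] using hbound

lemma lam_sq_mul_norm_le_of_fst_zero (h : IsDampedSolution Λ (fun s => 2 * b s) v w)
    (hb : ContinuousOn b (Set.Ici 0)) (hΛ : 0 ≤ Λ)
    (hbA : ∀ s ≥ (0 : ℝ), lam b s ^ 2 * ∫ r in 0..s, (lam b r ^ 2)⁻¹ ≤ A * (1 + s))
    (hv0 : v 0 = 0) (ht : 0 ≤ t) (hzone : Λ * (1 + t) ≤ N) :
    lam b t ^ 2 * ‖v t‖ ≤ A * N * (‖w 0‖ * Real.exp (A * N ^ 2)) ∧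
      lam b t ^ 2 * ‖w t‖ ≤ ‖w 0‖ * Real.exp (A * N ^ 2) := by
  obtain ⟨hv, hw⟩ := h.norm_le_of_fst_zero hb hΛ hv0 ht
  set I : ℝ := ∫ s in 0..t, Λ ^ 2 * (lam b s ^ 2 * ∫ r in 0..s, (lam b r ^ 2)⁻¹)
  have hI : I ≤ A * N ^ 2 := integral_sq_mul_le_of_le_mul_one_add hΛ
    (fun s hs => mul_nonneg (sq_nonneg _) (intervalIntegral.integral_nonneg hs fun r _ =>
      inv_nonneg.2 (sq_nonneg _))) hbA ht hzone
  have hA : 0 ≤ A := by simpa using hbA 0 le_rfl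
  have hN : 0 ≤ N := hzone.trans' (by positivity)
  refine ⟨?_, hw.trans (by gcongr)⟩
  calc lam b t ^ 2 * ‖v t‖
      ≤ lam b t ^ 2 * (Λ * (∫ s in 0..t, (lam b s ^ 2)⁻¹) * (‖w 0‖ * Real.exp I)) := by gcongr
    _ = Λ * (lam b t ^ 2 * ∫ s in 0..t, (lam b s ^ 2)⁻¹) * (‖w 0‖ * Real.exp I) := by ring
    _ ≤ Λ * (A * (1 + t)) * (‖w 0‖ * Real.exp I) := by gcongr Λ * ?_ * _; exact hbA t ht
    _ = A * (Λ * (1 + t)) * (‖w 0‖ * Real.exp I) := by ring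
    _ ≤ A * N * (‖w 0‖ * Real.exp (A * N ^ 2)) := by gcongr

end IsDampedSolution

lemma isDampedSolution_sysMat_column {Λ : ℝ} {b : ℝ → ℝ} {E : ℝ → Matrix (Fin 2) (Fin 2) ℂ}
    (hE : ∀ t ≥ (0 : ℝ), ∀ i j : Fin 2,
      HasDerivWithinAt (fun τ => E τ i j) ((sysMat Λ b t * E t) i j) (Set.Ici 0) t) (j : Fin 2) :
    IsDampedSolution Λ (fun t => 2 * b t) (fun t => E t 0 j) (fun t => E t 1 j) where
  hasDerivWithinAt_fst t ht :=
    (hE t ht 0 j).congr_deriv (by simp [sysMat, Matrix.mul_apply, Fin.sum_univ_two])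
  hasDerivWithinAt_snd t ht :=
    (hE t ht 1 j).congr_deriv <| by
      simp only [sysMat, Matrix.mul_apply, Fin.sum_univ_two, Matrix.of_apply, Matrix.cons_val',
        Matrix.cons_val_zero, Matrix.cons_val_one, Matrix.cons_val_fin_one, Complex.real_smul]
      push_cast
      ring

lemma one_le_mul_rpow_neg_div {Λ γ p C : ℝ} (hΛ : 0 < Λ) (hp : 0 < p) (h : Λ ^ γ * p ≤ C) :
    1 ≤ C * Λ ^ (-γ) / p := by
  rwa [Real.rpow_neg hΛ.le, ← div_eq_mul_inv, div_div, one_le_div (by positivity)]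

theorem dissipative_zone_estimate_C1_general
    (b : ℝ → ℝ) (hb : ContinuousOn b (Set.Ici 0)) (hb0 : ∀ t ≥ (0 : ℝ), 0 ≤ b t)
    (hlimsup : ∃ μ < (1 / 2 : ℝ), ∀ᶠ t in atTop, t * b t ≤ μ) (N γ K : ℝ)
    (hzone : ∀ Λ > (0 : ℝ), ∀ t ≥ (0 : ℝ), Λ * (1 + t) ≤ N → Λ ^ γ * (lam b t) ^ 2 ≤ K) :
    ∃ C > (0 : ℝ), ∀ Λ > (0 : ℝ), ∀ E : ℝ → Matrix (Fin 2) (Fin 2) ℂ,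
      E 0 = 1 →
      (∀ t ≥ (0 : ℝ), ∀ i j : Fin 2,
        HasDerivWithinAt (fun τ => E τ i j) ((sysMat Λ b t * E t) i j) (Set.Ici 0) t) →
      ∀ t ≥ (0 : ℝ), Λ * (1 + t) ≤ N →
        ‖E t 0 0‖ ≤ C * Λ ^ (-γ) / (lam b t) ^ 2 ∧
        ‖E t 1 0‖ ≤ C * Λ ^ (-γ) / (lam b t) ^ 2 ∧
        ‖E t 0 1‖ ≤ C / (lam b t) ^ 2 ∧
        ‖E t 1 1‖ ≤ C / (lam b t) ^ 2 := by
  obtain ⟨A, hbA⟩ := exists_lam_sq_mul_integral_inv_le hb hlimsup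
  set D : ℝ := Real.exp (A * N ^ 2)
  have hD : 0 < D := Real.exp_pos _
  refine ⟨max K (max (A * N * D) D), by simp [hD], fun Λ hΛ E hE0 hE t ht htN => ?_⟩
  have hp : 0 < lam b t ^ 2 := pow_pos (lam_pos b t) 2
  have hone := one_le_mul_rpow_neg_div hΛ hp
    ((hzone Λ hΛ t ht htN).trans (le_max_left K (max (A * N * D) D)))
  have henergy : ‖E t 0 0‖ ^ 2 + ‖E t 1 0‖ ^ 2 ≤ 1 := by
    simpa [hE0] using (isDampedSolution_sysMat_column hE 0).norm_sq_add_norm_sq_le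
      (fun s hs => mul_nonneg zero_le_two (hb0 s hs)) ht
  obtain ⟨h01, h11⟩ : lam b t ^ 2 * ‖E t 0 1‖ ≤ A * N * D ∧ lam b t ^ 2 * ‖E t 1 1‖ ≤ D := by
    simpa only [hE0, Matrix.one_apply_eq, norm_one, one_mul] using
      (isDampedSolution_sysMat_column hE 1).lam_sq_mul_norm_le_of_fst_zero
        hb hΛ.le hbA (by simp [hE0]) ht htN
  refine ⟨le_trans ?_ hone, le_trans ?_ hone, ?_, ?_⟩
  · exact (sq_le_one_iff₀ (norm_nonneg _)).1 (by linarith [sq_nonneg ‖E t 1 0‖])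
  · exact (sq_le_one_iff₀ (norm_nonneg _)).1 (by linarith [sq_nonneg ‖E t 0 0‖])
  · exact (le_div_iff₀' hp).2 (h01.trans (by simp))
  · exact (le_div_iff₀' hp).2 (h11.trans (by simp))

/-- Dissipative-zone estimate in the case
`limsup t·b(t) < 1/2`: on the zone `Λ(1+t) ≤ N` the entries of the fundamental
solution `E(t,0)` are bounded by `C·Λ^{−γ}·λ(t)^{−2}` (first column) and
`C·λ(t)^{−2}` (second column). -/
theorem dissipative_zone_estimate_C1
    (b b' : ℝ → ℝ) (C₁ C₂ : ℝ)
    (hb' : ∀ t ≥ (0:ℝ), HasDerivAt b (b' t) t)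
    (hb'c : ContinuousOn b' (Set.Ici 0))
    (hb0 : ∀ t ≥ (0:ℝ), 0 ≤ b t)
    (hb1 : ∀ t ≥ (0:ℝ), b t ≤ C₁ / (1 + t))
    (hb2 : ∀ t ≥ (0:ℝ), |b' t| ≤ C₂ / (1 + t) ^ 2)
    (hlimsup : ∃ μ < (1/2 : ℝ), ∀ᶠ t in atTop, t * b t ≤ μ)
    (N γ K : ℝ) (hN : 0 < N) (hγ : 0 ≤ γ) (hK : 0 < K)
    (hzone : ∀ Λ > (0:ℝ), ∀ t ≥ (0:ℝ), Λ * (1 + t) ≤ N → Λ ^ γ * (lam b t) ^ 2 ≤ K) :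
    ∃ C > (0:ℝ), ∀ Λ > (0:ℝ), ∀ E : ℝ → Matrix (Fin 2) (Fin 2) ℂ,
      E 0 = 1 →
      (∀ t ≥ (0:ℝ), ∀ i j : Fin 2,
        HasDerivAt (fun τ => E τ i j) ((sysMat Λ b t * E t) i j) t) →
      ∀ t ≥ (0:ℝ), Λ * (1 + t) ≤ N →
        ‖E t 0 0‖ ≤ C * Λ ^ (-γ) / (lam b t) ^ 2 ∧
        ‖E t 1 0‖ ≤ C * Λ ^ (-γ) / (lam b t) ^ 2 ∧
        ‖E t 0 1‖ ≤ C / (lam b t) ^ 2 ∧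
        ‖E t 1 1‖ ≤ C / (lam b t) ^ 2 := by
  obtain ⟨C, hC, hbound⟩ := dissipative_zone_estimate_C1_general b
    (fun t ht => (hb' t ht).continuousAt.continuousWithinAt) hb0 hlimsup N γ K hzone
  exact ⟨C, hC, fun Λ hΛ E hE0 hE =>
    hbound Λ hΛ E hE0 fun t ht i j => (hE t ht i j).hasDerivWithinAt⟩
end

section
/- Let b : [0,∞) → ℝ be continuously differentiable with b(t) ≥ 0, b(t) ≤ C₁(1+t)^{−1} and |b'(t)| ≤ C₂(1+t)^{−2} for all t ≥ 0, and assume liminf_{t→∞} t·b(t) > 1/2. Let N > 0. Then there is a constant C > 0 (depending only on b and N) such that for all Λ > 0 and all t ≥ 0 with Λ(1+t) ≤ N, the fundamental solution E(t,0) of the dissipative system satisfies the entrywise bounds |E(t,0)_{11}| ≤ C·Λ^{−1}(1+t)^{−1}, |E(t,0)_{21}| ≤ C·Λ^{−1}(1+t)^{−1}, |E(t,0)_{12}| ≤ C·(1+t)^{−1}, |E(t,0)_{22}| ≤ C·(1+t)^{−1}. -/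
open MeasureTheory Filter

/-!
For a column `(v, w)` of the system, the norm of `(1 + t) • w` is damped at rate
`2 b - 1 / (1 + t)`, which eventually exceeds `δ / (1 + t)` because `liminf t b(t) > 1/2`. In
`‖v‖ + (Λ / δ) (1 + t) ‖w‖` this damping absorbs the growth `‖v‖' ≤ Λ ‖w‖`, and what remains grows
at rate at most `Λ² (1 + t) / δ`, whose integral over the zone `Λ (1 + t) ≤ N` is at most `N² / δ`.
Grönwall's inequality therefore bounds this functional by a multiple of its initial value,
uniformly in `Λ`. Norms need not be differentiable, so these rates bound right difference quotients.
-/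

open Set Topology

section SlopeNorm

variable {F : Type*} [NormedAddCommGroup F] [NormedSpace ℝ F]

theorem eventually_slope_norm_le (f : ℝ → F) (k x : ℝ) :
    ∀ᶠ y in 𝓝[>] x, slope (fun s => ‖f s‖) x y ≤ ‖slope f x y + k • f x‖ - k * ‖f x‖ := by
  have hsmall : ∀ᶠ y in 𝓝[>] x, k * (y - x) < 1 := by
    have hcont : ContinuousAt (fun y => k * (y - x)) x := by fun_prop
    exact nhdsWithin_le_nhds (hcont.eventually_lt_const (by simp))
  filter_upwards [hsmall, self_mem_nhdsWithin] with y hky hxy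
  have hpos : 0 < y - x := sub_pos.2 hxy
  have hsplit : f y = (1 - k * (y - x)) • f x + (y - x) • (slope f x y + k • f x) := by
    rw [smul_add, sub_smul_slope, vsub_eq_sub]
    module
  have hnorm : ‖f y‖ ≤ (1 - k * (y - x)) * ‖f x‖ + (y - x) * ‖slope f x y + k • f x‖ := by
    calc ‖f y‖ ≤ ‖(1 - k * (y - x)) • f x‖ + ‖(y - x) • (slope f x y + k • f x)‖ := by
          conv_lhs => rw [hsplit]
          exact norm_add_le _ _
      _ = _ := by
          rw [norm_smul_of_nonneg (sub_nonneg.2 hky.le), norm_smul_of_nonneg hpos.le]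
  rw [slope_def_field, div_le_iff₀ hpos]
  linarith

theorem eventually_slope_norm_add_mul_norm_lt {f g : ℝ → F} {f' g' : F} {x c r : ℝ}
    (hf : HasDerivAt f f' x) (hg : HasDerivAt g g' x) (hc : 0 ≤ c) (k : ℝ)
    (hr : ‖f'‖ + c * (‖g' + k • g x‖ - k * ‖g x‖) < r) :
    ∀ᶠ y in 𝓝[>] x, slope (fun s => ‖f s‖ + c * ‖g s‖) x y < r := by
  have hlim : Tendsto
      (fun y => ‖slope f x y‖ + c * (‖slope g x y + k • g x‖ - k * ‖g x‖)) (𝓝[>] x)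
      (𝓝 (‖f'‖ + c * (‖g' + k • g x‖ - k * ‖g x‖))) :=
    (hf.tendsto_slope.mono_left (nhdsGT_le_nhdsNE x)).norm.add
      ((((hg.tendsto_slope.mono_left (nhdsGT_le_nhdsNE x)).add_const _).norm.sub_const _).const_mul
        c)
  filter_upwards [hlim.eventually_lt_const hr, eventually_slope_norm_le f 0 x,
    eventually_slope_norm_le g k x] with y hy hfy hgy
  have hslope : slope (fun s => ‖f s‖ + c * ‖g s‖) x y
      = slope (fun s => ‖f s‖) x y + c * slope (fun s => ‖g s‖) x y := by
    simp only [slope_def_field]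
    ring
  have hcg := mul_le_mul_of_nonneg_left hgy hc
  simp only [zero_smul, add_zero, zero_mul, sub_zero] at hfy
  linarith

end SlopeNorm

/-- `(v, w)` solves the dissipative system `v' = Λ w`, `w' = -Λ v - 2 b(t) w` on `[0, ∞)`. Its
values lie in an arbitrary real normed space, so that it applies to each complex column of the
fundamental solution. -/
structure IsDissipativeSolution {F : Type*} [NormedAddCommGroup F] [NormedSpace ℝ F]
    (b : ℝ → ℝ) (Λ : ℝ) (v w : ℝ → F) : Prop where
  hasDerivAt_fst : ∀ t ≥ 0, HasDerivAt v (Λ • w t) t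
  hasDerivAt_snd : ∀ t ≥ 0, HasDerivAt w (-(Λ • v t) - (2 * b t) • w t) t

/-- The Lyapunov functional `‖v‖ + (Λ / δ) ‖(1 + t) w‖` of the dissipative system. The parameter `δ`
is chosen as an eventual lower bound for `2 (1 + t) b(t) - 1`. -/
noncomputable def lyapunovFunctional {F : Type*} [NormedAddCommGroup F] [NormedSpace ℝ F]
    (Λ δ : ℝ) (v w : ℝ → F) (t : ℝ) : ℝ :=
  ‖v t‖ + Λ / δ * ‖(1 + t) • w t‖

section LyapunovFunctional

variable {F : Type*} [NormedAddCommGroup F] [NormedSpace ℝ F] {Λ δ N M t : ℝ} {v w : ℝ → F}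

theorem lyapunovFunctional_nonneg (hΛ : 0 ≤ Λ) (hδ : 0 ≤ δ) (t : ℝ) :
    0 ≤ lyapunovFunctional Λ δ v w t := by
  unfold lyapunovFunctional
  positivity

theorem max_norm_le_of_lyapunovFunctional_le (hΛ : 0 < Λ) (hδ : 0 < δ) (ht : 0 ≤ t)
    (hzone : Λ * (1 + t) ≤ N) (hM : lyapunovFunctional Λ δ v w t ≤ M) :
    max ‖v t‖ ‖w t‖ ≤ (N + δ) * M * Λ⁻¹ / (1 + t) := by
  have hpos : 0 < 1 + t := by positivity
  have hN : 0 < N := (mul_pos hΛ hpos).trans_le hzone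
  rw [lyapunovFunctional, norm_smul_of_nonneg hpos.le] at hM
  have hvM : ‖v t‖ ≤ M := le_trans (le_add_of_nonneg_right (by positivity)) hM
  have hwM : Λ / δ * ((1 + t) * ‖w t‖) ≤ M := le_trans (le_add_of_nonneg_left (by positivity)) hM
  have hM0 : 0 ≤ M := (norm_nonneg _).trans hvM
  have hv : Λ * (1 + t) * ‖v t‖ ≤ N * M := by gcongr
  have hw : Λ * (1 + t) * ‖w t‖ ≤ δ * M := by
    calc Λ * (1 + t) * ‖w t‖ = δ * (Λ / δ * ((1 + t) * ‖w t‖)) := by field_simp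
      _ ≤ δ * M := by gcongr
  have hNM : 0 ≤ N * M := by positivity
  have hδM : 0 ≤ δ * M := by positivity
  rw [← div_eq_mul_inv, div_div, le_div_iff₀ (by positivity), max_mul_of_nonneg _ _ (by positivity)]
  exact max_le (by linarith) (by linarith)

end LyapunovFunctional

theorem exists_one_add_div_le_two_mul {b : ℝ → ℝ}
    (hliminf : ∃ μ > (1 / 2 : ℝ), ∀ᶠ t in atTop, μ ≤ t * b t) :
    ∃ δ > 0, ∃ T ≥ 0, ∀ s ≥ T, (1 + δ) / (1 + s) ≤ 2 * b s := by
  obtain ⟨μ, hμ, hev⟩ := hliminf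
  obtain ⟨T, hT⟩ := eventually_atTop.1 (hev.and (eventually_ge_atTop 0))
  refine ⟨2 * μ - 1, by linarith, T, (hT T le_rfl).2, fun s hs => ?_⟩
  obtain ⟨hμs, hs0⟩ := hT s hs
  have hbs : 0 < b s := pos_of_mul_pos_right (by linarith) hs0
  rw [div_le_iff₀ (by positivity)]
  linarith

namespace IsDissipativeSolution

variable {F : Type*} [NormedAddCommGroup F] [NormedSpace ℝ F]
  {b : ℝ → ℝ} {Λ δ κ N T a t : ℝ} {v w : ℝ → F}

theorem hasDerivAt_one_add_smul_snd (h : IsDissipativeSolution b Λ v w) (ht : 0 ≤ t) :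
    HasDerivAt (fun s => (1 + s) • w s)
      (-(2 * b t - 1 / (1 + t)) • ((1 + t) • w t) - (Λ * (1 + t)) • v t) t := by
  refine (((hasDerivAt_id t).const_add 1).smul (h.hasDerivAt_snd t ht)).congr_deriv ?_
  have hne : 1 + t ≠ 0 := by positivity
  simp only [id_eq]
  match_scalars <;> field_simp
  ring

theorem eventually_slope_lyapunovFunctional_lt (h : IsDissipativeSolution b Λ v w) (hΛ : 0 ≤ Λ)
    (hδ : 0 < δ) (hκ : 0 ≤ κ) (ht : 0 ≤ t) (hb : (1 + δ) / (1 + t) - 2 * b t ≤ κ) {r : ℝ}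
    (hr : (Λ ^ 2 * (1 + t) / δ + κ) * lyapunovFunctional Λ δ v w t < r) :
    ∀ᶠ y in 𝓝[>] t, slope (lyapunovFunctional Λ δ v w) t y < r := by
  have hΛδ : 0 ≤ Λ / δ := by positivity
  refine eventually_slope_norm_add_mul_norm_lt (h.hasDerivAt_fst t ht)
    (h.hasDerivAt_one_add_smul_snd ht) hΛδ (2 * b t - 1 / (1 + t)) (lt_of_le_of_lt ?_ hr)
  have hpos : 0 < 1 + t := by positivity
  have hforcing : ‖-(2 * b t - 1 / (1 + t)) • ((1 + t) • w t) - (Λ * (1 + t)) • v t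
      + (2 * b t - 1 / (1 + t)) • ((1 + t) • w t)‖ = Λ * (1 + t) * ‖v t‖ := by
    rw [neg_smul, neg_sub_comm, sub_add_cancel, norm_neg,
      norm_smul_of_nonneg (by positivity)]
  have hw : ‖w t‖ = ‖(1 + t) • w t‖ / (1 + t) := by
    rw [norm_smul_of_nonneg hpos.le, mul_div_cancel_left₀ _ hpos.ne']
  rw [hforcing, norm_smul_of_nonneg hΛ, hw, lyapunovFunctional]
  set p := ‖(1 + t) • w t‖
  calc Λ * (p / (1 + t)) + Λ / δ * (Λ * (1 + t) * ‖v t‖ - (2 * b t - 1 / (1 + t)) * p)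
      = Λ ^ 2 * (1 + t) / δ * ‖v t‖ + ((1 + δ) / (1 + t) - 2 * b t) * (Λ / δ * p) := by
        field_simp
        ring
    _ ≤ Λ ^ 2 * (1 + t) / δ * ‖v t‖ + κ * (Λ / δ * p) := by gcongr
    _ ≤ (Λ ^ 2 * (1 + t) / δ + κ) * (‖v t‖ + Λ / δ * p) := by
        have hcross : 0 ≤ κ * ‖v t‖ + Λ ^ 2 * (1 + t) / δ * (Λ / δ * p) := by positivity
        linarith

theorem continuousOn_lyapunovFunctional (h : IsDissipativeSolution b Λ v w) :
    ContinuousOn (lyapunovFunctional Λ δ v w) (Ici 0) := by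
  have hv : ContinuousOn v (Ici 0) := HasDerivAt.continuousOn h.hasDerivAt_fst
  have hw : ContinuousOn w (Ici 0) := HasDerivAt.continuousOn h.hasDerivAt_snd
  unfold lyapunovFunctional
  fun_prop

theorem lyapunovFunctional_le_mul_exp (h : IsDissipativeSolution b Λ v w) (hΛ : 0 ≤ Λ)
    (hδ : 0 < δ) (hκ : 0 ≤ κ) (ha : 0 ≤ a) (hat : a ≤ t) (hzone : Λ * (1 + t) ≤ N)
    (hb : ∀ s ∈ Ico a t, (1 + δ) / (1 + s) - 2 * b s ≤ κ) :
    lyapunovFunctional Λ δ v w t ≤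
      lyapunovFunctional Λ δ v w a * Real.exp (N ^ 2 / δ + κ * (t - a)) := by
  have hgronwall := le_gronwallBound_of_liminf_deriv_right_le (ε := 0)
    (K := Λ ^ 2 * (1 + t) / δ + κ)
    (h.continuousOn_lyapunovFunctional.mono fun s hs => ha.trans hs.1)
    (fun s hs r hr => by
      simpa only [slope_def_module, smul_eq_mul] using
        (h.eventually_slope_lyapunovFunctional_lt hΛ hδ hκ (ha.trans hs.1) (hb s hs)
          hr).frequently)
    le_rfl
    (fun s hs => by
      have hst := hs.2.le
      have hnonneg := lyapunovFunctional_nonneg (v := v) (w := w) hΛ hδ.le s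
      rw [add_zero]
      gcongr)
    t ⟨hat, le_rfl⟩
  rw [gronwallBound_ε0] at hgronwall
  have hpos : 0 ≤ 1 + t := by linarith
  have hrate : Λ ^ 2 * (1 + t) * (t - a) ≤ N ^ 2 := by
    calc Λ ^ 2 * (1 + t) * (t - a) ≤ Λ ^ 2 * (1 + t) * (1 + t) := by
          gcongr
          linarith
      _ = (Λ * (1 + t)) ^ 2 := by ring
      _ ≤ N ^ 2 := by gcongr
  refine hgronwall.trans (mul_le_mul_of_nonneg_left (Real.exp_le_exp.2 ?_)
    (lyapunovFunctional_nonneg hΛ hδ.le a))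
  calc (Λ ^ 2 * (1 + t) / δ + κ) * (t - a) = Λ ^ 2 * (1 + t) * (t - a) / δ + κ * (t - a) := by ring
    _ ≤ N ^ 2 / δ + κ * (t - a) := by gcongr

variable (F) in
theorem exists_lyapunovFunctional_le (hb : BddBelow (b '' Ici 0)) (hδ : 0 < δ) (hT : 0 ≤ T)
    (hlate : ∀ s ≥ T, (1 + δ) / (1 + s) ≤ 2 * b s) (N : ℝ) :
    ∃ K > 0, ∀ Λ ≥ 0, ∀ v w : ℝ → F, IsDissipativeSolution b Λ v w → ∀ t ≥ 0, Λ * (1 + t) ≤ N →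
      lyapunovFunctional Λ δ v w t ≤ K * lyapunovFunctional Λ δ v w 0 := by
  obtain ⟨β, hβ⟩ := hb
  set κ := 1 + δ + 2 * |β|
  refine ⟨Real.exp (N ^ 2 / δ + κ * T) * Real.exp (N ^ 2 / δ), by positivity, ?_⟩
  intro Λ hΛ v w h t ht hzone
  have hm : 0 ≤ min t T := le_min ht hT
  have hzone_min : Λ * (1 + min t T) ≤ N :=
    (mul_le_mul_of_nonneg_left (by grind) hΛ).trans hzone
  have hearly : ∀ s ∈ Ico 0 (min t T), (1 + δ) / (1 + s) - 2 * b s ≤ κ := fun s hs => by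
    have hdiv : (1 + δ) / (1 + s) ≤ 1 + δ := div_le_self (by linarith) (by linarith [hs.1])
    linarith [hβ (mem_image_of_mem b hs.1), neg_abs_le β]
  have hlate_min : ∀ s ∈ Ico (min t T) t, (1 + δ) / (1 + s) - 2 * b s ≤ 0 := fun s hs =>
    sub_nonpos.2 (hlate s (by grind))
  calc lyapunovFunctional Λ δ v w t
      ≤ lyapunovFunctional Λ δ v w (min t T) * Real.exp (N ^ 2 / δ) := by
        simpa using
          h.lyapunovFunctional_le_mul_exp hΛ hδ le_rfl hm (min_le_left t T) hzone hlate_min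
    _ ≤ lyapunovFunctional Λ δ v w 0 * Real.exp (N ^ 2 / δ + κ * (min t T - 0)) *
          Real.exp (N ^ 2 / δ) := by
        gcongr
        exact h.lyapunovFunctional_le_mul_exp hΛ hδ (by positivity) le_rfl hm hzone_min hearly
    _ ≤ lyapunovFunctional Λ δ v w 0 * Real.exp (N ^ 2 / δ + κ * T) * Real.exp (N ^ 2 / δ) := by
        have hnonneg := lyapunovFunctional_nonneg (v := v) (w := w) hΛ hδ.le 0
        gcongr
        simp
    _ = _ := by ring

variable (F) in
theorem exists_max_norm_le (hb : BddBelow (b '' Ici 0))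
    (hliminf : ∃ μ > (1 / 2 : ℝ), ∀ᶠ t in atTop, μ ≤ t * b t) (hN : 0 < N) :
    ∃ C > 0, ∀ Λ > 0, ∀ v w : ℝ → F, IsDissipativeSolution b Λ v w → ∀ t ≥ 0, Λ * (1 + t) ≤ N →
      max ‖v t‖ ‖w t‖ ≤ C * (Λ⁻¹ * ‖v 0‖ + ‖w 0‖) / (1 + t) := by
  obtain ⟨δ, hδ, T, hT, hlate⟩ := exists_one_add_div_le_two_mul hliminf
  obtain ⟨K, hK, hbound⟩ := exists_lyapunovFunctional_le F hb hδ hT hlate N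
  refine ⟨(N + δ) * K * (1 + δ⁻¹), by positivity, fun Λ hΛ v w h t ht hzone => ?_⟩
  calc max ‖v t‖ ‖w t‖
      ≤ (N + δ) * (K * lyapunovFunctional Λ δ v w 0) * Λ⁻¹ / (1 + t) :=
        max_norm_le_of_lyapunovFunctional_le hΛ hδ ht hzone (hbound Λ hΛ.le v w h t ht hzone)
    _ = (N + δ) * K * (Λ⁻¹ * ‖v 0‖ + δ⁻¹ * ‖w 0‖) / (1 + t) := by
        simp only [lyapunovFunctional, add_zero, one_smul]
        field_simp
    _ ≤ (N + δ) * K * ((1 + δ⁻¹) * (Λ⁻¹ * ‖v 0‖ + ‖w 0‖)) / (1 + t) := by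
        gcongr
        have hcross : 0 ≤ δ⁻¹ * (Λ⁻¹ * ‖v 0‖) + ‖w 0‖ := by positivity
        linarith
    _ = _ := by ring

end IsDissipativeSolution

theorem isDissipativeSolution_col {b : ℝ → ℝ} {Λ : ℝ} {E : ℝ → Matrix (Fin 2) (Fin 2) ℂ}
    (hE : ∀ t ≥ (0 : ℝ), ∀ i j : Fin 2,
      HasDerivAt (fun τ => E τ i j) ((sysMat Λ b t * E t) i j) t) (j : Fin 2) :
    IsDissipativeSolution b Λ (fun t => E t 0 j) (fun t => E t 1 j) where
  hasDerivAt_fst t ht := (hE t ht 0 j).congr_deriv <| by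
    simp [sysMat, Matrix.mul_apply, Fin.sum_univ_two]
  hasDerivAt_snd t ht := (hE t ht 1 j).congr_deriv <| by
    simp [sysMat, Matrix.mul_apply, Fin.sum_univ_two, sub_eq_add_neg]

theorem dissipative_zone_estimate_C2_general
    (b : ℝ → ℝ) (hb : BddBelow (b '' Ici 0))
    (hliminf : ∃ μ > (1 / 2 : ℝ), ∀ᶠ t in atTop, μ ≤ t * b t)
    (N : ℝ) (hN : 0 < N) :
    ∃ C > (0 : ℝ), ∀ Λ > (0 : ℝ), ∀ E : ℝ → Matrix (Fin 2) (Fin 2) ℂ,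
      E 0 = 1 →
      (∀ t ≥ (0 : ℝ), ∀ i j : Fin 2,
        HasDerivAt (fun τ => E τ i j) ((sysMat Λ b t * E t) i j) t) →
      ∀ t ≥ (0 : ℝ), Λ * (1 + t) ≤ N →
        ‖E t 0 0‖ ≤ C * Λ⁻¹ / (1 + t) ∧
        ‖E t 1 0‖ ≤ C * Λ⁻¹ / (1 + t) ∧
        ‖E t 0 1‖ ≤ C / (1 + t) ∧
        ‖E t 1 1‖ ≤ C / (1 + t) := by
  obtain ⟨C, hC, hbound⟩ := IsDissipativeSolution.exists_max_norm_le ℂ hb hliminf hN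
  refine ⟨C, hC, fun Λ hΛ E hE0 hE t ht hzone => ?_⟩
  have hcol (j : Fin 2) := hbound Λ hΛ _ _ (isDissipativeSolution_col hE j) t ht hzone
  have hcol₀ : max ‖E t 0 0‖ ‖E t 1 0‖ ≤ C * Λ⁻¹ / (1 + t) := by simpa [hE0] using hcol 0
  have hcol₁ : max ‖E t 0 1‖ ‖E t 1 1‖ ≤ C / (1 + t) := by simpa [hE0] using hcol 1
  exact ⟨(le_max_left _ _).trans hcol₀, (le_max_right _ _).trans hcol₀,
    (le_max_left _ _).trans hcol₁, (le_max_right _ _).trans hcol₁⟩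

/-- Dissipative-zone estimate in the case
`liminf t·b(t) > 1/2`: on the zone `Λ(1+t) ≤ N` the entries of the fundamental
solution `E(t,0)` are bounded by `C·Λ^{−1}(1+t)^{−1}` (first column) and
`C·(1+t)^{−1}` (second column). -/
theorem dissipative_zone_estimate_C2
    (b b' : ℝ → ℝ) (C₁ C₂ : ℝ)
    (hb' : ∀ t ≥ (0:ℝ), HasDerivAt b (b' t) t)
    (hb'c : ContinuousOn b' (Set.Ici 0))
    (hb0 : ∀ t ≥ (0:ℝ), 0 ≤ b t)
    (hb1 : ∀ t ≥ (0:ℝ), b t ≤ C₁ / (1 + t))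
    (hb2 : ∀ t ≥ (0:ℝ), |b' t| ≤ C₂ / (1 + t) ^ 2)
    (hliminf : ∃ μ > (1/2 : ℝ), ∀ᶠ t in atTop, μ ≤ t * b t)
    (N : ℝ) (hN : 0 < N) :
    ∃ C > (0:ℝ), ∀ Λ > (0:ℝ), ∀ E : ℝ → Matrix (Fin 2) (Fin 2) ℂ,
      E 0 = 1 →
      (∀ t ≥ (0:ℝ), ∀ i j : Fin 2,
        HasDerivAt (fun τ => E τ i j) ((sysMat Λ b t * E t) i j) t) →
      ∀ t ≥ (0:ℝ), Λ * (1 + t) ≤ N →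
        ‖E t 0 0‖ ≤ C * Λ⁻¹ / (1 + t) ∧
        ‖E t 1 0‖ ≤ C * Λ⁻¹ / (1 + t) ∧
        ‖E t 0 1‖ ≤ C / (1 + t) ∧
        ‖E t 1 1‖ ≤ C / (1 + t) :=
  dissipative_zone_estimate_C2_general b ⟨0, forall_mem_image.2 hb0⟩ hliminf N hN
end

section
/- Let b : [0,∞) → ℝ be continuous and nonnegative with liminf_{t→∞} t·b(t) > 1/2. Then ∫₀^∞ exp(−2∫₀^t b(τ)dτ) dt < ∞, i.e. the function 1/λ(t)² is integrable on [0,∞), where λ(t) = exp(∫₀^t b(τ)dτ). -/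
open MeasureTheory Filter

/-!
If `a ≤ t * b t` for `t ≥ T`, comparison with `a / t` gives `a * log t ≤ ∫₀ᵗ b + C`, so that
`exp (-κ ∫₀ᵗ b)` is `O(t ^ (-κ a))`, which is integrable at infinity as soon as `a > 1 / κ`.
On bounded intervals the exponential is continuous, hence integrable.
-/

open Set Asymptotics

theorem intervalIntegrable_of_locallyIntegrableOn {E : Type*} [NormedAddCommGroup E]
    {μ : Measure ℝ} {f : ℝ → E} {s : Set ℝ} (hs : s.OrdConnected)
    (hf : LocallyIntegrableOn f s μ)
    {x y : ℝ} (hx : x ∈ s) (hy : y ∈ s) : IntervalIntegrable f μ x y :=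
  (hf.integrableOn_compact_subset (hs.uIcc_subset hx hy)
    isCompact_uIcc).intervalIntegrable

theorem continuousOn_primitive_Ici {E : Type*} [NormedAddCommGroup E] [NormedSpace ℝ E]
    {μ : Measure ℝ} [NullSingletonClass μ] {f : ℝ → E} {t₀ : ℝ}
    (hf : LocallyIntegrableOn f (Ici t₀) μ) :
    ContinuousOn (fun t => ∫ τ in t₀..t, f τ ∂μ) (Ici t₀) := by
  intro t ht
  have ht' : t₀ ≤ t + 1 := le_add_of_le_of_nonneg ht zero_le_one
  have hcont : ContinuousOn (fun t => ∫ τ in t₀..t, f τ ∂μ) (Icc t₀ (t + 1)) :=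
    uIcc_of_le ht' ▸ intervalIntegral.continuousOn_primitive_interval'
      (intervalIntegrable_of_locallyIntegrableOn ordConnected_Ici hf self_mem_Ici ht') left_mem_uIcc
  have hnhds : Icc t₀ (t + 1) ∈ nhdsWithin t (Ici t₀) :=
    inter_mem_nhdsWithin _ (Iic_mem_nhds (lt_add_one t))
  exact (hcont t ⟨ht, (lt_add_one t).le⟩).mono_of_mem_nhdsWithin hnhds

theorem mul_log_div_le_integral {b : ℝ → ℝ} {a T t : ℝ} (hT : 0 < T) (hTt : T ≤ t)
    (hb : IntervalIntegrable b volume T t) (hab : ∀ τ ∈ Icc T t, a ≤ τ * b τ) :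
    a * Real.log (t / T) ≤ ∫ τ in T..t, b τ := by
  have hinv : IntervalIntegrable (fun τ : ℝ => τ⁻¹) volume T t :=
    intervalIntegrable_inv_iff.2 (.inr (notMem_uIcc_of_lt hT (hT.trans_le hTt)))
  calc a * Real.log (t / T) = ∫ τ in T..t, a * τ⁻¹ := by
        rw [intervalIntegral.integral_const_mul, integral_inv_of_pos hT (hT.trans_le hTt)]
    _ ≤ ∫ τ in T..t, b τ := by
        refine intervalIntegral.integral_mono_on hTt (hinv.const_mul a) hb fun τ hτ => ?_
        exact (mul_inv_le_iff₀' (hT.trans_le hτ.1)).2 (hab τ hτ)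

section Primitive

variable {b : ℝ → ℝ} {a t₀ κ : ℝ}

theorem exists_eventually_mul_log_le_integral_add (hb : LocallyIntegrableOn b (Ici t₀))
    (hab : ∀ᶠ t in atTop, a ≤ t * b t) :
    ∃ C, ∀ᶠ t in atTop, a * Real.log t ≤ (∫ τ in t₀..t, b τ) + C := by
  obtain ⟨T, hT, hT₀, hTpos⟩ := ((eventually_forall_ge_atTop.2 hab).and
    ((eventually_ge_atTop t₀).and (eventually_gt_atTop 0))).exists
  refine ⟨a * Real.log T - ∫ τ in t₀..T, b τ, ?_⟩
  filter_upwards [eventually_ge_atTop T] with t ht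
  have hint {x y : ℝ} (hx : t₀ ≤ x) (hy : t₀ ≤ y) : IntervalIntegrable b volume x y :=
    intervalIntegrable_of_locallyIntegrableOn ordConnected_Ici hb hx hy
  have hsplit : (∫ τ in t₀..T, b τ) + ∫ τ in T..t, b τ = ∫ τ in t₀..t, b τ :=
    intervalIntegral.integral_add_adjacent_intervals (hint le_rfl hT₀) (hint hT₀ (hT₀.trans ht))
  have hlog : a * Real.log (t / T) ≤ ∫ τ in T..t, b τ :=
    mul_log_div_le_integral hTpos ht (hint hT₀ (hT₀.trans ht)) fun τ hτ => hT τ hτ.1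
  rw [Real.log_div (hTpos.trans_le ht).ne' hTpos.ne'] at hlog
  linarith

theorem isBigO_exp_neg_mul_integral_rpow (hκ : 0 ≤ κ) (hb : LocallyIntegrableOn b (Ici t₀))
    (hab : ∀ᶠ t in atTop, a ≤ t * b t) :
    (fun t => Real.exp (-(κ * ∫ τ in t₀..t, b τ))) =O[atTop] fun t => t ^ (-(κ * a)) := by
  obtain ⟨C, hC⟩ := exists_eventually_mul_log_le_integral_add hb hab
  have hrpow : (fun t : ℝ => Real.exp (Real.log t * -(κ * a))) =ᶠ[atTop]
      fun t => t ^ (-(κ * a)) := by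
    filter_upwards [eventually_gt_atTop 0] with t ht
    exact (Real.rpow_def_of_pos ht _).symm
  refine (Real.isBigO_exp_comp_exp_comp.2 ?_).trans_eventuallyEq hrpow
  refine isBoundedUnder_of_eventually_le (a := κ * C) ?_
  filter_upwards [hC] with t ht
  have hscaled : κ * (a * Real.log t) ≤ κ * ((∫ τ in t₀..t, b τ) + C) :=
    mul_le_mul_of_nonneg_left ht hκ
  simp only [Pi.sub_apply]
  linarith

theorem inv_lambda_sq_integrable_general (hκ : 0 < κ) (hb : LocallyIntegrableOn b (Ici t₀))
    (hliminf : ∃ a > 1 / κ, ∀ᶠ t in atTop, a ≤ t * b t) :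
    IntegrableOn (fun t => Real.exp (-(κ * ∫ τ in t₀..t, b τ))) (Ici t₀) := by
  obtain ⟨a, ha, hab⟩ := hliminf
  have hcont : ContinuousOn (fun t => Real.exp (-(κ * ∫ τ in t₀..t, b τ))) (Ici t₀) :=
    ((continuousOn_primitive_Ici hb).const_mul κ).neg.rexp
  have hexp : -(κ * a) < -1 := neg_lt_neg ((div_lt_iff₀' hκ).1 ha)
  exact (hcont.locallyIntegrableOn measurableSet_Ici).integrableOn_of_isBigO_atTop
    (isBigO_exp_neg_mul_integral_rpow hκ.le hb hab) (integrableAtFilter_rpow_atTop_iff.2 hexp)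

end Primitive

/-- If `b ≥ 0` is continuous on `[0,∞)` and
`liminf_{t→∞} t·b(t) > 1/2`, then `1/λ(t)² = exp(−2∫₀^t b)` is integrable on `[0,∞)`. -/
theorem inv_lambda_sq_integrable
    (b : ℝ → ℝ)
    (hbc : ContinuousOn b (Set.Ici 0))
    (hb0 : ∀ t ≥ (0:ℝ), 0 ≤ b t)
    (hliminf : ∃ a > (1/2 : ℝ), ∀ᶠ t in atTop, a ≤ t * b t) :
    IntegrableOn (fun t => Real.exp (-(2 * ∫ τ in (0:ℝ)..t, b τ))) (Set.Ici 0) :=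
  inv_lambda_sq_integrable_general two_pos (hbc.locallyIntegrableOn measurableSet_Ici) hliminf
end

section
/- Under the hypotheses and notation of the hyperbolic-zone diagonalisation (b continuously differentiable with |b(t)| ≤ C₁(1+t)^{−1}, |b'(t)| ≤ C₂(1+t)^{−2}, N > C₁, Λ > 0, s ≥ 0 with Λ(1+s) ≥ N, and Q₁ the solution of (d/dt)Q₁(t) = −Ẽ₀(s,t)·R₁(t)·Ẽ₀(t,s)·Q₁(t), Q₁(s) = I), the matrix Q₁(t) is invertible for every t ≥ s, and the limit matrix Q₁(∞,s) = lim_{t→∞} Q₁(t) is invertible. -/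
open MeasureTheory Filter

/-- The matrix `N^{(1)}(t) = [[0, −i·b(t)/(2Λ)], [i·b(t)/(2Λ), 0]]`. -/
noncomputable def Nmat (b : ℝ → ℝ) (Λ t : ℝ) : Matrix (Fin 2) (Fin 2) ℂ :=
  !![0, -(Complex.I * b t / (2 * Λ)); Complex.I * b t / (2 * Λ), 0]

/-- The matrix `N₁(t) = I − N^{(1)}(t)`. -/
noncomputable def None' (b : ℝ → ℝ) (Λ t : ℝ) : Matrix (Fin 2) (Fin 2) ℂ :=
  1 - Nmat b Λ t

/-- The remainder matrix `R₁(t) = −N₁(t)⁻¹·((d/dt)N^{(1)}(t) + b(t)N^{(1)}(t))`. -/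
noncomputable def Rone (b b' : ℝ → ℝ) (Λ t : ℝ) : Matrix (Fin 2) (Fin 2) ℂ :=
  -((None' b Λ t)⁻¹ * (Nmat b' Λ t + (b t : ℂ) • Nmat b Λ t))

/-- The diagonal free propagator `Ẽ₀(t,s) = diag(e^{−iΛ(t−s)}, e^{iΛ(t−s)})`. -/
noncomputable def Etil (Λ t s : ℝ) : Matrix (Fin 2) (Fin 2) ℂ :=
  !![Complex.exp (-(Complex.I * Λ * (t - s))), 0;
     0, Complex.exp (Complex.I * Λ * (t - s))]

/-!
Everything rests on Grönwall's inequality `‖f b‖ ≤ ‖f a‖ exp (∫ₐᵇ g)` for `‖f'‖ ≤ g ‖f‖`, run in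
both directions of time. If `Q' = A Q` in a Banach algebra with `‖A‖ ≤ g` and `g` integrable on
`[s, ∞)`, the forward estimate bounds `Q`, so `Q'` is integrable and `Q` converges. The backward
estimate, applied to `t ↦ Q t * x`, bounds left multiplication by `Q t` from below uniformly in `t`.
An element of the closure of the units which is bounded below in this sense is itself a unit, so
invertibility propagates from `Q s` along the connected curve `Q` and then to its limit.

For `Q₁` one takes `A = -Ẽ₀(s,t) R₁(t) Ẽ₀(t,s)`, with the `ℓ^∞` operator norm on matrices: the
propagators have norm one, and in the hyperbolic zone the Neumann series bounds `N₁⁻¹` uniformly, so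
that `‖A t‖` is at most a constant times `(1 + t)⁻²`.
-/

section Gronwall

open Set

variable {E : Type*} [NormedAddCommGroup E] [NormedSpace ℝ E] {f f' : ℝ → E} {g : ℝ → ℝ} {a b : ℝ}

theorem hasDerivWithinAt_Ici_integral_of_continuousOn_Icc (hg : ContinuousOn g (Icc a b)) {t : ℝ}
    (ht : t ∈ Ico a b) : HasDerivWithinAt (fun u => ∫ τ in a..u, g τ) (g t) (Ici t) t := by
  have hIcc : Icc a b ∈ nhdsWithin t (Ioi t) := Icc_mem_nhdsGT_of_mem ht
  have hmeas : StronglyMeasurableAtFilter g (nhdsWithin t (Ioi t)) :=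
    ⟨Icc a b, hIcc, hg.aestronglyMeasurable measurableSet_Icc⟩
  have hint : IntervalIntegrable g volume a t :=
    (hg.mono (Icc_subset_Icc_right ht.2.le)).intervalIntegrable_of_Icc ht.1
  exact intervalIntegral.integral_hasDerivWithinAt_right hint hmeas
    ((hg t (Ico_subset_Icc_self ht)).mono_of_mem_nhdsWithin hIcc)

theorem norm_le_norm_mul_exp_integral_of_norm_deriv_right_le (hab : a ≤ b)
    (hf : ContinuousOn f (Icc a b))
    (hf' : ∀ t ∈ Ico a b, HasDerivWithinAt f (f' t) (Ici t) t)
    (hg : ContinuousOn g (Icc a b)) (hbound : ∀ t ∈ Ico a b, ‖f' t‖ ≤ g t * ‖f t‖) :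
    ‖f b‖ ≤ ‖f a‖ * Real.exp (∫ t in a..b, g t) := by
  -- Perturbing by `ε` makes the barrier positive and its growth rate strictly larger than `g`.
  let barrier (ε t : ℝ) : ℝ := (‖f a‖ + ε) * Real.exp ((∫ τ in a..t, g τ) + ε * (t - a))
  have hbarrier_cont (ε : ℝ) : ContinuousOn (barrier ε) (Icc a b) := by
    have hprim : ContinuousOn (fun t => ∫ τ in a..t, g τ) (Icc a b) := by
      rw [← uIcc_of_le hab] at hg ⊢
      exact intervalIntegral.continuousOn_primitive_interval
        (hg.integrableOn_compact isCompact_uIcc)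
    fun_prop
  have hbarrier_deriv (ε : ℝ) : ∀ t ∈ Ico a b,
      HasDerivWithinAt (barrier ε) ((g t + ε) * barrier ε t) (Ici t) t := by
    intro t ht
    have hlin : HasDerivWithinAt (fun u => ε * (u - a)) ε (Ici t) t := by
      simpa using (((hasDerivAt_id t).sub_const a).const_mul ε).hasDerivWithinAt
    have hexp := ((hasDerivWithinAt_Ici_integral_of_continuousOn_Icc hg ht).add hlin).exp
    exact (hexp.const_mul (‖f a‖ + ε)).congr_deriv (by simp only [barrier, Pi.add_apply]; ring)
  have hle_barrier : ∀ ε > 0, ‖f b‖ ≤ barrier ε b := by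
    intro ε hε
    refine image_norm_le_of_norm_deriv_right_lt_deriv_boundary' hf hf' (by simp [barrier, hε.le])
      (hbarrier_cont ε) (hbarrier_deriv ε) (fun t ht heq => ?_) (right_mem_Icc.2 hab)
    calc ‖f' t‖ ≤ g t * barrier ε t := heq ▸ hbound t ht
      _ < (g t + ε) * barrier ε t := by gcongr; linarith
  have hlim : Tendsto (fun ε => barrier ε b) (nhdsWithin 0 (Ioi 0)) (nhds (barrier 0 b)) := by
    have hcont : Continuous fun ε => barrier ε b := by fun_prop
    exact (hcont.tendsto 0).mono_left nhdsWithin_le_nhds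
  have hle_barrier_zero : ‖f b‖ ≤ barrier 0 b :=
    ge_of_tendsto hlim (eventually_mem_nhdsWithin.mono hle_barrier)
  simpa [barrier] using hle_barrier_zero

theorem norm_le_norm_mul_exp_integral_of_norm_deriv_left_le (hab : a ≤ b)
    (hf : ContinuousOn f (Icc a b))
    (hf' : ∀ t ∈ Ioc a b, HasDerivWithinAt f (f' t) (Iic t) t)
    (hg : ContinuousOn g (Icc a b)) (hbound : ∀ t ∈ Ioc a b, ‖f' t‖ ≤ g t * ‖f t‖) :
    ‖f a‖ ≤ ‖f b‖ * Real.exp (∫ t in a..b, g t) := by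
  have hIcc : MapsTo Neg.neg (Icc (-b) (-a)) (Icc a b) :=
    fun t ht => ⟨le_neg.2 ht.2, neg_le.2 ht.1⟩
  have hIoc : ∀ t ∈ Ico (-b) (-a), -t ∈ Ioc a b := fun t ht => ⟨lt_neg.2 ht.2, neg_le.2 ht.1⟩
  have hreversed := norm_le_norm_mul_exp_integral_of_norm_deriv_right_le
    (f := fun t => f (-t)) (f' := fun t => -f' (-t)) (g := fun t => g (-t)) (neg_le_neg hab)
    (hf.comp continuousOn_neg hIcc)
    (fun t ht => by
      have hneg : MapsTo Neg.neg (Ici t) (Iic (-t)) := fun u hu => neg_le_neg (mem_Ici.1 hu)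
      simpa [Function.comp_def] using
        (hf' (-t) (hIoc t ht)).scomp t (hasDerivAt_neg t).hasDerivWithinAt hneg)
    (hg.comp continuousOn_neg hIcc)
    (fun t ht => by simpa using hbound (-t) (hIoc t ht))
  simpa [intervalIntegral.integral_comp_neg] using hreversed

end Gronwall

section IntegrableCoefficient

open Set

variable {E : Type*} [NormedAddCommGroup E] [NormedSpace ℝ E] {f f' : ℝ → E} {g : ℝ → ℝ} {s t : ℝ}

theorem intervalIntegral_le_integral_Ioi (hg₀ : ∀ t ≥ s, 0 ≤ g t) (hgi : IntegrableOn g (Ioi s))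
    (ht : s ≤ t) : ∫ τ in s..t, g τ ≤ ∫ τ in Ioi s, g τ := by
  rw [intervalIntegral.integral_of_le ht]
  refine setIntegral_mono_set hgi ?_ Ioc_subset_Ioi_self.eventuallyLE
  exact ae_restrict_of_forall_mem measurableSet_Ioi fun τ hτ => hg₀ τ (le_of_lt hτ)

theorem norm_le_norm_mul_exp_integral_Ioi (hf : ∀ t ≥ s, HasDerivWithinAt f (f' t) (Ici s) t)
    (hg₀ : ∀ t ≥ s, 0 ≤ g t) (hgc : ContinuousOn g (Ici s)) (hgi : IntegrableOn g (Ioi s))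
    (hbound : ∀ t ≥ s, ‖f' t‖ ≤ g t * ‖f t‖) (ht : s ≤ t) :
    ‖f t‖ ≤ ‖f s‖ * Real.exp (∫ τ in Ioi s, g τ) := by
  have hfc : ContinuousOn f (Ici s) := fun τ hτ => (hf τ hτ).continuousWithinAt
  calc ‖f t‖ ≤ ‖f s‖ * Real.exp (∫ τ in s..t, g τ) :=
        norm_le_norm_mul_exp_integral_of_norm_deriv_right_le ht (hfc.mono Icc_subset_Ici_self)
          (fun τ hτ => (hf τ hτ.1).mono (Ici_subset_Ici.2 hτ.1)) (hgc.mono Icc_subset_Ici_self)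
          (fun τ hτ => hbound τ hτ.1)
    _ ≤ ‖f s‖ * Real.exp (∫ τ in Ioi s, g τ) := by
        gcongr; exact intervalIntegral_le_integral_Ioi hg₀ hgi ht

theorem norm_initial_le_norm_mul_exp_integral_Ioi
    (hf : ∀ t ≥ s, HasDerivWithinAt f (f' t) (Ici s) t)
    (hg₀ : ∀ t ≥ s, 0 ≤ g t) (hgc : ContinuousOn g (Ici s)) (hgi : IntegrableOn g (Ioi s))
    (hbound : ∀ t ≥ s, ‖f' t‖ ≤ g t * ‖f t‖) (ht : s ≤ t) :
    ‖f s‖ ≤ ‖f t‖ * Real.exp (∫ τ in Ioi s, g τ) := by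
  have hfc : ContinuousOn f (Ici s) := fun τ hτ => (hf τ hτ).continuousWithinAt
  calc ‖f s‖ ≤ ‖f t‖ * Real.exp (∫ τ in s..t, g τ) :=
        norm_le_norm_mul_exp_integral_of_norm_deriv_left_le ht (hfc.mono Icc_subset_Ici_self)
          (fun τ hτ => ((hf τ hτ.1.le).hasDerivAt (Ici_mem_nhds hτ.1)).hasDerivWithinAt)
          (hgc.mono Icc_subset_Ici_self) (fun τ hτ => hbound τ hτ.1.le)
    _ ≤ ‖f t‖ * Real.exp (∫ τ in Ioi s, g τ) := by
        gcongr; exact intervalIntegral_le_integral_Ioi hg₀ hgi ht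

theorem exists_tendsto_atTop_of_norm_deriv_le_mul_norm [CompleteSpace E]
    (hf : ∀ t ≥ s, HasDerivWithinAt f (f' t) (Ici s) t)
    (hg₀ : ∀ t ≥ s, 0 ≤ g t) (hgc : ContinuousOn g (Ici s)) (hgi : IntegrableOn g (Ioi s))
    (hbound : ∀ t ≥ s, ‖f' t‖ ≤ g t * ‖f t‖) : ∃ l, Tendsto f atTop (nhds l) := by
  have hderiv : ∀ t ∈ Ioi s, HasDerivAt f (f' t) t :=
    fun t ht => (hf t (le_of_lt ht)).hasDerivAt (Ici_mem_nhds ht)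
  have hmeas : AEStronglyMeasurable f' (volume.restrict (Ioi s)) :=
    (aestronglyMeasurable_deriv f _).congr <|
      ae_restrict_of_forall_mem measurableSet_Ioi fun t ht => (hderiv t ht).deriv
  have hf'_le : ∀ t ∈ Ioi s, ‖f' t‖ ≤ g t * (‖f s‖ * Real.exp (∫ τ in Ioi s, g τ)) := by
    intro t ht
    refine (hbound t (le_of_lt ht)).trans ?_
    exact mul_le_mul_of_nonneg_left
      (norm_le_norm_mul_exp_integral_Ioi hf hg₀ hgc hgi hbound (le_of_lt ht)) (hg₀ t (le_of_lt ht))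
  have hf'_int : IntegrableOn f' (Ioi s) :=
    (hgi.mul_const _).mono' hmeas (ae_restrict_of_forall_mem measurableSet_Ioi hf'_le)
  exact ⟨_, tendsto_limUnder_of_hasDerivAt_of_integrableOn_Ioi hderiv hf'_int⟩

end IntegrableCoefficient

section UnitsOfBanachAlgebra

open Set

variable {𝔸 : Type*} [NormedRing 𝔸] [CompleteSpace 𝔸]

theorem isUnit_of_norm_inv_mul_norm_sub_lt_one {a : 𝔸} (u : 𝔸ˣ)
    (h : ‖(↑u⁻¹ : 𝔸)‖ * ‖u - a‖ < 1) : IsUnit a := by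
  have hfactor : a = u * (1 - ↑u⁻¹ * (u - a)) := by simp [mul_sub]
  rw [hfactor]
  exact u.isUnit.mul (isUnit_one_sub_of_norm_lt_one ((norm_mul_le _ _).trans_lt h))

theorem isUnit_of_mem_closure_of_norm_le_mul_norm_mul {a : 𝔸} {C : ℝ}
    (ha : a ∈ closure {x : 𝔸 | IsUnit x}) (hC : ∀ x, ‖x‖ ≤ C * ‖a * x‖) : IsUnit a := by
  have hC' (x : 𝔸) : ‖x‖ ≤ |C| * ‖a * x‖ := (hC x).trans (by gcongr; exact le_abs_self C)
  have hnear : ∀ᶠ y in nhds a, |C| * ‖y - a‖ * (‖(1 : 𝔸)‖ + 1) < 1 := by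
    have hcont : Continuous fun y => |C| * ‖y - a‖ * (‖(1 : 𝔸)‖ + 1) := by fun_prop
    exact hcont.continuousAt.eventually_lt_const (by simp)
  obtain ⟨_, hu, u, rfl⟩ := (hnear.and_frequently (mem_closure_iff_frequently.1 ha)).exists
  refine isUnit_of_norm_inv_mul_norm_sub_lt_one u ?_
  set x := ‖(↑u⁻¹ : 𝔸)‖ * ‖u - a‖ with hx
  have hinv : ‖(↑u⁻¹ : 𝔸)‖ ≤ |C| * (‖(1 : 𝔸)‖ + x) := by
    have hmul : a * ↑u⁻¹ = 1 - (u - a) * ↑u⁻¹ := by simp [sub_mul]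
    calc ‖(↑u⁻¹ : 𝔸)‖ ≤ |C| * ‖1 - (u - a) * ↑u⁻¹‖ := hmul ▸ hC' _
      _ ≤ |C| * (‖(1 : 𝔸)‖ + ‖u - a‖ * ‖(↑u⁻¹ : 𝔸)‖) := by
          gcongr; exact (norm_sub_le _ _).trans (by gcongr; exact norm_mul_le _ _)
      _ = |C| * (‖(1 : 𝔸)‖ + x) := by rw [hx, mul_comm ‖u - a‖]
  by_contra! hx_ge
  have hx_lt : x < x :=
    calc x ≤ |C| * (‖(1 : 𝔸)‖ + x) * ‖u - a‖ := by rw [hx]; gcongr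
      _ ≤ |C| * (‖(1 : 𝔸)‖ * x + x) * ‖u - a‖ := by
          gcongr; exact le_mul_of_one_le_right (norm_nonneg _) hx_ge
      _ = |C| * ‖u - a‖ * (‖(1 : 𝔸)‖ + 1) * x := by ring
      _ < 1 * x := by gcongr
      _ = x := one_mul x
  exact lt_irrefl x hx_lt

theorem norm_inverse_one_sub_le [NormOneClass 𝔸] {x : 𝔸} {q : ℝ} (hx : ‖x‖ ≤ q) (hq : q < 1) :
    ‖Ring.inverse (1 - x)‖ ≤ (1 - q)⁻¹ := by
  have hx_lt : ‖x‖ < 1 := hx.trans_lt hq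
  calc ‖Ring.inverse (1 - x)‖ = ‖∑' n : ℕ, x ^ n‖ := by
        rw [NormedRing.inverse_one_sub x hx_lt]; rfl
    _ ≤ (1 - ‖x‖)⁻¹ := by simpa using tsum_geometric_le_of_norm_lt_one x hx_lt
    _ ≤ (1 - q)⁻¹ := inv_anti₀ (sub_pos.2 hq) (sub_le_sub_left hx 1)

end UnitsOfBanachAlgebra

section LinearODE

open Set

variable {𝔸 : Type*} [NormedRing 𝔸] [NormedAlgebra ℝ 𝔸] {A Q : ℝ → 𝔸} {g : ℝ → ℝ} {s : ℝ}

theorem exists_norm_le_mul_norm_mul_of_linear_ode (hQs : IsUnit (Q s))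
    (hQ : ∀ t ≥ s, HasDerivWithinAt Q (A t * Q t) (Ici s) t) (hA : ∀ t ≥ s, ‖A t‖ ≤ g t)
    (hgc : ContinuousOn g (Ici s)) (hgi : IntegrableOn g (Ioi s)) :
    ∃ C, ∀ t ≥ s, ∀ x, ‖x‖ ≤ C * ‖Q t * x‖ := by
  obtain ⟨u, hu⟩ := hQs
  refine ⟨‖(↑u⁻¹ : 𝔸)‖ * Real.exp (∫ τ in Ioi s, g τ), fun t ht x => ?_⟩
  have hinitial : ‖Q s * x‖ ≤ ‖Q t * x‖ * Real.exp (∫ τ in Ioi s, g τ) :=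
    norm_initial_le_norm_mul_exp_integral_Ioi (fun τ hτ => (hQ τ hτ).mul_const x)
      (fun τ hτ => (norm_nonneg _).trans (hA τ hτ)) hgc hgi
      (fun τ hτ => by rw [mul_assoc]; exact norm_mul_le_of_le (hA τ hτ) le_rfl) ht
  calc ‖x‖ = ‖↑u⁻¹ * (Q s * x)‖ := by rw [← hu, Units.inv_mul_cancel_left]
    _ ≤ ‖(↑u⁻¹ : 𝔸)‖ * (‖Q t * x‖ * Real.exp (∫ τ in Ioi s, g τ)) :=
        norm_mul_le_of_le le_rfl hinitial
    _ = _ := by ring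

theorem isUnit_and_exists_tendsto_isUnit_of_linear_ode [CompleteSpace 𝔸] (hQs : IsUnit (Q s))
    (hQ : ∀ t ≥ s, HasDerivWithinAt Q (A t * Q t) (Ici s) t) (hA : ∀ t ≥ s, ‖A t‖ ≤ g t)
    (hgc : ContinuousOn g (Ici s)) (hgi : IntegrableOn g (Ioi s)) :
    (∀ t ≥ s, IsUnit (Q t)) ∧ ∃ Qinf, Tendsto Q atTop (nhds Qinf) ∧ IsUnit Qinf := by
  obtain ⟨C, hC⟩ := exists_norm_le_mul_norm_mul_of_linear_ode hQs hQ hA hgc hgi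
  have hunit : ∀ t ≥ s, IsUnit (Q t) := by
    have hcurve : IsPreconnected (Q '' Ici s) :=
      isPreconnected_Ici.image Q fun t ht => (hQ t ht).continuousWithinAt
    have hsub : Q '' Ici s ⊆ {x | IsUnit x} := by
      refine hcurve.subset_of_closure_inter_subset Units.isOpen
        ⟨Q s, mem_image_of_mem Q self_mem_Ici, hQs⟩ ?_
      rintro _ ⟨hcl, t, ht, rfl⟩
      exact isUnit_of_mem_closure_of_norm_le_mul_norm_mul hcl (hC t ht)
    exact fun t ht => hsub (mem_image_of_mem Q ht)
  obtain ⟨Qinf, hlim⟩ := exists_tendsto_atTop_of_norm_deriv_le_mul_norm hQ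
    (fun t ht => (norm_nonneg _).trans (hA t ht)) hgc hgi
    (fun t ht => norm_mul_le_of_le (hA t ht) le_rfl)
  have hlim_closure : Qinf ∈ closure {x : 𝔸 | IsUnit x} :=
    mem_closure_of_tendsto hlim ((eventually_ge_atTop s).mono hunit)
  have hlim_bound (x : 𝔸) : ‖x‖ ≤ C * ‖Qinf * x‖ :=
    ge_of_tendsto ((hlim.mul_const x).norm.const_mul C)
      ((eventually_ge_atTop s).mono fun t ht => hC t ht x)
  exact ⟨hunit, Qinf, hlim, isUnit_of_mem_closure_of_norm_le_mul_norm_mul hlim_closure hlim_bound⟩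

end LinearODE

section HyperbolicZone

open Set
open scoped Matrix.Norms.Operator

theorem norm_Nmat (b : ℝ → ℝ) (Λ t : ℝ) : ‖Nmat b Λ t‖ = |b t| / (2 * |Λ|) := by
  have hentry : ‖Complex.I * b t / (2 * Λ)‖₊ = ‖b t‖₊ / (2 * ‖Λ‖₊) := by
    simp only [nnnorm_div, nnnorm_mul, Complex.nnnorm_I, Complex.nnnorm_real, one_mul,
      Complex.nnnorm_ofNat]
  simp [Matrix.linfty_opNorm_def, Nmat, hentry, Fin.univ_succ]

theorem Nmat_add_smul_Nmat (b b' : ℝ → ℝ) (Λ t : ℝ) :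
    Nmat b' Λ t + (b t : ℂ) • Nmat b Λ t = Nmat (fun τ => b' τ + b τ ^ 2) Λ t := by
  ext i j
  fin_cases i <;> fin_cases j <;> simp [Nmat] <;> ring

theorem norm_Etil (Λ t s : ℝ) : ‖Etil Λ t s‖ = 1 := by
  have hphase : ‖Complex.exp (Complex.I * Λ * (t - s))‖₊ = 1 := by
    simpa [mul_assoc] using Complex.nnnorm_exp_I_mul_ofReal (Λ * (t - s))
  simp [Matrix.linfty_opNorm_def, Etil, Complex.exp_neg, hphase, Fin.univ_succ]

theorem norm_neg_Etil_mul_mul_Etil_le (Λ t s : ℝ) (R : Matrix (Fin 2) (Fin 2) ℂ) :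
    ‖-(Etil Λ s t * R * Etil Λ t s)‖ ≤ ‖R‖ := by
  calc ‖-(Etil Λ s t * R * Etil Λ t s)‖ ≤ ‖Etil Λ s t‖ * ‖R‖ * ‖Etil Λ t s‖ := by
        rw [norm_neg]; exact norm_mul₃_le
    _ = ‖R‖ := by rw [norm_Etil, norm_Etil, one_mul, mul_one]

theorem norm_Rone_le {b b' : ℝ → ℝ} {Λ t q : ℝ} (hb : |b t| / (2 * |Λ|) ≤ q) (hq : q < 1) :
    ‖Rone b b' Λ t‖ ≤ (1 - q)⁻¹ * (|b' t + b t ^ 2| / (2 * |Λ|)) := by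
  rw [Rone, norm_neg, None', Nmat_add_smul_Nmat, Matrix.nonsing_inv_eq_ringInverse]
  exact norm_mul_le_of_le (norm_inverse_one_sub_le ((norm_Nmat b Λ t).trans_le hb) hq)
    (norm_Nmat _ Λ t).le

theorem exists_norm_Rone_le_div_sq {b b' : ℝ → ℝ} {C₁ C₂ Λ s : ℝ} (hs : -1 < s)
    (hb : ∀ t ≥ s, |b t| ≤ C₁ / (1 + t)) (hb' : ∀ t ≥ s, |b' t| ≤ C₂ / (1 + t) ^ 2)
    (hzone : C₁ < 2 * Λ * (1 + s)) :
    ∃ K, ∀ t ≥ s, ‖Rone b b' Λ t‖ ≤ K / (1 + t) ^ 2 := by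
  have hs_pos : 0 < 1 + s := by linarith
  have hC₁ : 0 ≤ C₁ := by
    simpa [hs_pos] using (le_div_iff₀ hs_pos).1 ((abs_nonneg _).trans (hb s le_rfl))
  have hΛ : 0 < Λ := by
    have : 0 < 2 * Λ := pos_of_mul_pos_left (hC₁.trans_lt hzone) hs_pos.le
    linarith
  set q := C₁ / (1 + s) / (2 * Λ) with hq_def
  have hq : q < 1 := by
    rwa [hq_def, div_lt_one (by positivity), div_lt_iff₀ hs_pos]
  refine ⟨(1 - q)⁻¹ * ((C₂ + C₁ ^ 2) / (2 * Λ)), fun t ht => ?_⟩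
  have hb_le_q : |b t| / (2 * |Λ|) ≤ q := by
    rw [abs_of_pos hΛ]
    calc |b t| / (2 * Λ) ≤ C₁ / (1 + t) / (2 * Λ) := by gcongr; exact hb t ht
      _ ≤ q := by rw [hq_def]; gcongr
  have hnumerator : |b' t + b t ^ 2| ≤ (C₂ + C₁ ^ 2) / (1 + t) ^ 2 :=
    calc |b' t + b t ^ 2| ≤ |b' t| + |b t| ^ 2 := by rw [← abs_pow]; exact abs_add_le _ _
      _ ≤ C₂ / (1 + t) ^ 2 + (C₁ / (1 + t)) ^ 2 := by
          gcongr
          exacts [hb' t ht, hb t ht]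
      _ = (C₂ + C₁ ^ 2) / (1 + t) ^ 2 := by rw [div_pow, add_div]
  calc ‖Rone b b' Λ t‖ ≤ (1 - q)⁻¹ * (|b' t + b t ^ 2| / (2 * |Λ|)) := norm_Rone_le hb_le_q hq
    _ ≤ (1 - q)⁻¹ * ((C₂ + C₁ ^ 2) / (1 + t) ^ 2 / (2 * Λ)) := by
        rw [abs_of_pos hΛ]
        have : 0 < 1 - q := sub_pos.2 hq
        gcongr
    _ = (1 - q)⁻¹ * ((C₂ + C₁ ^ 2) / (2 * Λ)) / (1 + t) ^ 2 := by ring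

theorem continuousOn_div_one_add_sq (K : ℝ) {s : ℝ} (hs : -1 < s) :
    ContinuousOn (fun t => K / (1 + t) ^ 2) (Ici s) := by
  refine ContinuousOn.div (by fun_prop) (by fun_prop) fun t ht => pow_ne_zero 2 ?_
  linarith [mem_Ici.1 ht]

theorem integrableOn_div_one_add_sq (K : ℝ) {s : ℝ} (hs : -1 < s) :
    IntegrableOn (fun t => K / (1 + t) ^ 2) (Ioi s) := by
  have hrpow : IntegrableOn (fun t => K * (t + 1) ^ (-2 : ℝ)) (Ioi s) :=
    (integrableOn_add_rpow_Ioi_of_lt (by norm_num) hs).const_mul K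
  refine hrpow.congr_fun (fun t ht => ?_) measurableSet_Ioi
  have ht_nonneg : 0 ≤ 1 + t := by linarith [mem_Ioi.1 ht]
  simp only [Real.rpow_neg ht_nonneg, Real.rpow_ofNat, div_eq_mul_inv, add_comm t]

end HyperbolicZone

theorem hyperbolic_zone_Q1_invertible_general
    (b b' : ℝ → ℝ) (C₁ C₂ Λ s : ℝ) (hs : -1 < s)
    (hb' : ∀ t ≥ s, HasDerivWithinAt b (b' t) (Set.Ici s) t)
    (hb1 : ∀ t ≥ s, |b t| ≤ C₁ / (1 + t))
    (hb2 : ∀ t ≥ s, |b' t| ≤ C₂ / (1 + t) ^ 2)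
    (hzone : C₁ < 2 * Λ * (1 + s))
    (Q₁ : ℝ → Matrix (Fin 2) (Fin 2) ℂ)
    (hQs : IsUnit (Q₁ s))
    (hQ : ∀ t ≥ s, ∀ i j : Fin 2,
      HasDerivWithinAt (fun τ => Q₁ τ i j)
        ((-(Etil Λ s t * Rone b b' Λ t * Etil Λ t s) * Q₁ t) i j) (Set.Ici s) t) :
    (∀ t ≥ s, IsUnit (Q₁ t)) ∧
    ∃ Qinf : Matrix (Fin 2) (Fin 2) ℂ,
      Tendsto Q₁ atTop (nhds Qinf) ∧ IsUnit Qinf := by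
  obtain ⟨K, hK⟩ := exists_norm_Rone_le_div_sq hs hb1 hb2 hzone
  open scoped Matrix.Norms.Operator in
  exact isUnit_and_exists_tendsto_isUnit_of_linear_ode hQs
    (fun t ht => hasDerivWithinAt_pi.2 fun i => hasDerivWithinAt_pi.2 fun j => hQ t ht i j)
    (fun t ht => (norm_neg_Etil_mul_mul_Etil_le Λ t s _).trans (hK t ht))
    (continuousOn_div_one_add_sq K hs) (integrableOn_div_one_add_sq K hs)

/-- In the hyperbolic zone the matrix `Q₁(t)` is invertible
for every `t ≥ s`, and the limit matrix `Q₁(∞,s) = lim_{t→∞} Q₁(t)` is invertible. -/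
theorem hyperbolic_zone_Q1_invertible
    (b b' : ℝ → ℝ) (C₁ C₂ N : ℝ)
    (hb' : ∀ t ≥ (0:ℝ), HasDerivAt b (b' t) t)
    (hb'c : ContinuousOn b' (Set.Ici 0))
    (hb1 : ∀ t ≥ (0:ℝ), |b t| ≤ C₁ / (1 + t))
    (hb2 : ∀ t ≥ (0:ℝ), |b' t| ≤ C₂ / (1 + t) ^ 2)
    (hN : C₁ < N)
    (Λ s : ℝ) (hΛ : 0 < Λ) (hs : 0 ≤ s) (hzone : N ≤ Λ * (1 + s))
    (Q₁ : ℝ → Matrix (Fin 2) (Fin 2) ℂ)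
    (hQs : Q₁ s = 1)
    (hQ : ∀ t ≥ s, ∀ i j : Fin 2,
      HasDerivAt (fun τ => Q₁ τ i j)
        ((-(Etil Λ s t * Rone b b' Λ t * Etil Λ t s) * Q₁ t) i j) t) :
    (∀ t ≥ s, IsUnit (Q₁ t)) ∧
    ∃ Qinf : Matrix (Fin 2) (Fin 2) ℂ,
      Tendsto Q₁ atTop (nhds Qinf) ∧ IsUnit Qinf := by
  have hs_pos : 0 < 1 + s := by linarith
  have hzone' : C₁ < 2 * Λ * (1 + s) := by nlinarith [mul_pos hΛ hs_pos]
  exact hyperbolic_zone_Q1_invertible_general b b' C₁ C₂ Λ s (by linarith)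
    (fun t ht => (hb' t (hs.trans ht)).hasDerivWithinAt) (fun t ht => hb1 t (hs.trans ht))
    (fun t ht => hb2 t (hs.trans ht)) hzone' Q₁ (hQs ▸ isUnit_one)
    (fun t ht i j => (hQ t ht i j).hasDerivWithinAt)
end
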